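/- arXiv:2205.15216 — 2 statements merged into one kernel-verified Lean document; each statement's English description precedes it below -/
import Mathlib

section
/- Let 1/2 < t < 1, δ := 1−t, and suppose the positive integer M, the constants K, l > 0 with K ≥ (2/3)^{1/2}, the constants c₁, c₂, d₁, d₂, c_{λ,ν} > 0, positive reals ξ₁, ξ₂, η₁, η₂, positive-valued functions ν₁, ν₂, λ₁, λ₂ : ℕ → ℝ_{>0}, positive integers N₁ < N₀, and the smooth increasing function f : ℝ_{≥1} → ℝ_{>0} satisfy, for all integers n₀ ≥ N₀ and n₁ ≥ N₁: f(n₀) ≥ K·f((1+l)n₀); c₁ξ₁ν₁(n₁)/f(n₁)^{t+δt} ≤ ∑_{n=1}^{n₁-1} f(n)^{-(t+δt)} ≤ c₂ξ₂ν₂(n₁)/f(n₁)^{t+δt}; d₁η₁λ₁(n₁)/f(n₁)^{2t} ≤ ∑_{n=n₁}^{∞} f(n)^{-2t} ≤ d₂η₂λ₂(n₁)/f(n₁)^{2t}; λ₁(n₀) ≥ c_{λ,ν}ν₂(n₀); M ≥ max{4^{1/(1-t)}(c₂ξ₂/(c_{λ,ν}d₁η₁))^{2/(t(1-t))}, (50/K^{t(2-t)})^{2/(1-t)}};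 max_{x∈[n₀,n₀+9M²]} f'(x) ≤ (1/4752)M^{-4}f(n₀); f(n₀+9M²) ≤ (264M²)^{1/t}f(n₀); and 9M·f(n₀)^t ≤ l·n₀. Fix integers n_max ≥ n₀ ≥ N₀, and let ℛ be a finite family of rectangles with pairwise disjoint interiors satisfying area(ℛ) = ∑_{n=n₀}^{∞} f(n)^{-2t}, perim_δ(ℛ) ≤ M^{-1+δ/2}·∑_{n=1}^{n₀-1} f(n)^{-(t+δt)}, and sup_{R∈ℛ} h(R) ≤ 1. Then the squares of sidelength f(n)^{-t} for n₀ ≤ n < n_max can be packed into ⋃_{R∈ℛ} R. -/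
open Set MeasureTheory

/-- The axis-parallel square with lower-left corner `c` and sidelength `s`. -/
noncomputable def square (c : ℝ × ℝ) (s : ℝ) : Set (ℝ × ℝ) :=
  Set.Icc c.1 (c.1 + s) ×ˢ Set.Icc c.2 (c.2 + s)

/-- The axis-parallel rectangle with lower-left corner `c`, horizontal sidelength `a`
and vertical sidelength `b`. -/
noncomputable def rectangle (c : ℝ × ℝ) (a b : ℝ) : Set (ℝ × ℝ) :=
  Set.Icc c.1 (c.1 + a) ×ˢ Set.Icc c.2 (c.2 + b)

/-- An axis-parallel box `[x0, x1] × [y0, y1]`. -/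
structure Box where
  x0 : ℝ
  x1 : ℝ
  y0 : ℝ
  y1 : ℝ

namespace Box

/-- The closed planar set underlying a box. -/
def carrier (B : Box) : Set (ℝ × ℝ) := Set.Icc B.x0 B.x1 ×ˢ Set.Icc B.y0 B.y1

def Valid (B : Box) : Prop := B.x0 ≤ B.x1 ∧ B.y0 ≤ B.y1

def area (B : Box) : ℝ := (B.x1 - B.x0) * (B.y1 - B.y0)

/-- The contribution `w ^ δ * h` of a box to `perim_δ`. -/
noncomputable def perimPow (δ : ℝ) (B : Box) : ℝ :=
  min (B.x1 - B.x0) (B.y1 - B.y0) ^ δ * max (B.x1 - B.x0) (B.y1 - B.y0)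

/-- Coordinatewise containment of boxes. -/
def Within (A B : Box) : Prop := B.x0 ≤ A.x0 ∧ A.x1 ≤ B.x1 ∧ B.y0 ≤ A.y0 ∧ A.y1 ≤ B.y1

/-- The interiors of two boxes are disjoint. -/
def Apart (A B : Box) : Prop := Disjoint (interior A.carrier) (interior B.carrier)

lemma Within.subset {A B : Box} (h : A.Within B) : A.carrier ⊆ B.carrier :=
  Set.prod_mono (Set.Icc_subset_Icc h.1 h.2.1) (Set.Icc_subset_Icc h.2.2.1 h.2.2.2)

lemma Apart.symm {A B : Box} (h : A.Apart B) : B.Apart A := Disjoint.symm h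

lemma Apart.mono {A B A' B' : Box} (h : A.Apart B) (hA : A'.carrier ⊆ A.carrier)
    (hB : B'.carrier ⊆ B.carrier) : A'.Apart B' :=
  Disjoint.mono (interior_mono hA) (interior_mono hB) h

lemma apart_of_separated {A B : Box}
    (h : A.x1 ≤ B.x0 ∨ B.x1 ≤ A.x0 ∨ A.y1 ≤ B.y0 ∨ B.y1 ≤ A.y0) : A.Apart B := by
  unfold Apart carrier
  rw [interior_prod_eq, interior_prod_eq]
  simp only [interior_Icc]
  rw [Set.disjoint_left]
  rintro ⟨u, v⟩ ⟨⟨h1, h2⟩, h3, h4⟩ ⟨⟨h5, h6⟩, h7, h8⟩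
  dsimp only at *
  rcases h with h | h | h | h <;> linarith

lemma Valid.area_nonneg {B : Box} (h : B.Valid) : 0 ≤ B.area :=
  mul_nonneg (sub_nonneg.2 h.1) (sub_nonneg.2 h.2)

lemma perimPow_le {δ : ℝ} (hδ : 0 ≤ δ) {A : Box} (hA : A.Valid) {u v : ℝ}
    (hu : A.x1 - A.x0 ≤ u) (hv : A.y1 - A.y0 ≤ v) :
    A.perimPow δ ≤ min u v ^ δ * max u v := by
  have h1 := sub_nonneg.2 hA.1
  have h2 := sub_nonneg.2 hA.2
  unfold perimPow
  have h3 : 0 ≤ min (A.x1 - A.x0) (A.y1 - A.y0) := le_min h1 h2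
  have h4 : min (A.x1 - A.x0) (A.y1 - A.y0) ≤ min u v := min_le_min hu hv
  have h5 : max (A.x1 - A.x0) (A.y1 - A.y0) ≤ max u v := max_le_max hu hv
  have h6 : 0 ≤ max (A.x1 - A.x0) (A.y1 - A.y0) := le_max_of_le_left h1
  exact mul_le_mul (Real.rpow_le_rpow h3 h4 hδ) h5 h6 (Real.rpow_nonneg (h3.trans h4) _)

/-- A box described by its extents along a chosen first axis and the other axis. -/
def oriented (o : Bool) (u0 u1 v0 v1 : ℝ) : Box :=
  if o then ⟨u0, u1, v0, v1⟩ else ⟨v0, v1, u0, u1⟩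

end Box

open Box

/-- Coordinates of a grid deformed so that a rectangular gap opens at every vertex. -/
structure IsPinwheel (x y : ℕ → ℕ → ℝ) : Prop where
  x_mono : ∀ j, Monotone fun i => x i j
  x_anti : ∀ i, Antitone (x i)
  y_mono_left : ∀ j, Monotone fun i => y i j
  y_mono : ∀ i, Monotone (y i)

/-- Cells (left) and vertex gaps (right) of a deformed grid. -/
def pinwheelTile (x y : ℕ → ℕ → ℝ) : (ℕ × ℕ) ⊕ (ℕ × ℕ) → Box
  | .inl (i, j) => ⟨x i j, x (i + 1) j, y i j, y i (j + 1)⟩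
  | .inr (i, j) => ⟨x (i + 1) (j + 1), x (i + 1) j, y i (j + 1), y (i + 1) (j + 1)⟩

namespace IsPinwheel

variable {x y : ℕ → ℕ → ℝ}

lemma x_le (h : IsPinwheel x y) {i i' j j' : ℕ} (hi : i ≤ i') (hj : j' ≤ j) :
    x i j ≤ x i' j' := (h.x_mono j hi).trans (h.x_anti i' hj)

lemma y_le (h : IsPinwheel x y) {i i' j j' : ℕ} (hi : i ≤ i') (hj : j ≤ j') :
    y i j ≤ y i' j' := (h.y_mono_left j hi).trans (h.y_mono i' hj)

lemma valid (h : IsPinwheel x y) (q : (ℕ × ℕ) ⊕ (ℕ × ℕ)) : (pinwheelTile x y q).Valid := by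
  rcases q with ⟨i, j⟩ | ⟨i, j⟩
  · exact ⟨h.x_le (by omega) le_rfl, h.y_le le_rfl (by omega)⟩
  · exact ⟨h.x_le le_rfl (by omega), h.y_le (by omega) le_rfl⟩

lemma cell_apart_gap (h : IsPinwheel x y) (q r : ℕ × ℕ) :
    (pinwheelTile x y (.inl q)).Apart (pinwheelTile x y (.inr r)) := by
  obtain ⟨i', j'⟩ := q
  obtain ⟨i, j⟩ := r
  apply apart_of_separated
  simp only [pinwheelTile]
  rcases le_or_gt i' i with hi | hi <;> rcases le_or_gt j' j with hj | hj
  · exact .inr <| .inr <| .inl <| h.y_le (by omega) (by omega)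
  · exact .inl <| h.x_le (by omega) (by omega)
  · exact .inr <| .inl <| h.x_le (by omega) (by omega)
  · exact .inr <| .inr <| .inr <| h.y_le (by omega) (by omega)

lemma apart (h : IsPinwheel x y) {q r : (ℕ × ℕ) ⊕ (ℕ × ℕ)} (hqr : q ≠ r) :
    (pinwheelTile x y q).Apart (pinwheelTile x y r) := by
  rcases q with ⟨i, j⟩ | ⟨i, j⟩ <;> rcases r with ⟨i', j'⟩ | ⟨i', j'⟩
  · apply apart_of_separated
    simp only [pinwheelTile]
    have : i ≠ i' ∨ j ≠ j' := by
      by_contra! hh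
      exact hqr (by rw [hh.1, hh.2])
    rcases lt_trichotomy i i' with hi | hi | hi
    · rcases lt_or_ge j j' with hj | hj
      · exact .inr <| .inr <| .inl <| h.y_le (by omega) (by omega)
      · exact .inl <| h.x_le (by omega) (by omega)
    · rcases lt_or_ge j j' with hj | hj
      · exact .inr <| .inr <| .inl <| h.y_le (by omega) (by omega)
      · exact .inr <| .inr <| .inr <| h.y_le (by omega) (by omega)
    · rcases lt_or_ge j' j with hj | hj
      · exact .inr <| .inr <| .inr <| h.y_le (by omega) (by omega)
      · exact .inr <| .inl <| h.x_le (by omega) (by omega)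
  · exact h.cell_apart_gap _ _
  · exact (h.cell_apart_gap _ _).symm
  · apply apart_of_separated
    simp only [pinwheelTile]
    have : i ≠ i' ∨ j ≠ j' := by
      by_contra! hh
      exact hqr (by rw [hh.1, hh.2])
    rcases lt_trichotomy i i' with hi | hi | hi
    · rcases le_or_gt j j' with hj | hj
      · exact .inr <| .inr <| .inl <| h.y_le (by omega) (by omega)
      · exact .inl <| h.x_le (by omega) (by omega)
    · rcases lt_or_ge j j' with hj | hj
      · exact .inr <| .inl <| h.x_le (by omega) (by omega)
      · exact .inl <| h.x_le (by omega) (by omega)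
    · rcases le_or_gt j' j with hj | hj
      · exact .inr <| .inr <| .inr <| h.y_le (by omega) (by omega)
      · exact .inr <| .inl <| h.x_le (by omega) (by omega)

end IsPinwheel

lemma sum_range_mul_diff_by_parts (z u : ℕ → ℝ) (I : ℕ) :
    ∑ i ∈ Finset.range I, z (i + 1) * (u (i + 1) - u i) =
      z (I + 1) * u I - z 0 * u 0 - ∑ i ∈ Finset.range (I + 1), (z (i + 1) - z i) * u i := by
  induction I with
  | zero => simp; ring
  | succ I ih => rw [Finset.sum_range_succ, ih, Finset.sum_range_succ _ (I + 1)]; ring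

lemma sum_pinwheelTile_area {x y : ℕ → ℕ → ℝ} {I J : ℕ} {X0 X1 Y0 Y1 : ℝ}
    (hx0 : ∀ j, x 0 j = X0) (hx1 : ∀ j, x (I + 1) j = X1)
    (hy0 : ∀ i, y i 0 = Y0) (hy1 : ∀ i, y i (J + 1) = Y1) :
    ∑ q ∈ Finset.range (I + 1) ×ˢ Finset.range (J + 1), (pinwheelTile x y (.inl q)).area +
      ∑ q ∈ Finset.range I ×ˢ Finset.range J, (pinwheelTile x y (.inr q)).area =
      (X1 - X0) * (Y1 - Y0) := by
  set top : ℕ → ℝ := fun j => ∑ i ∈ Finset.range (I + 1), (x (i + 1) j - x i j) * y i (j + 1)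
    with htop
  set bot : ℕ → ℝ := fun j => ∑ i ∈ Finset.range (I + 1), (x (i + 1) j - x i j) * y i j
    with hbot
  have hcell (j : ℕ) : ∑ i ∈ Finset.range (I + 1), (pinwheelTile x y (.inl (i, j))).area =
      top j - bot j := by
    rw [htop, hbot]
    simp only
    rw [← Finset.sum_sub_distrib]
    exact Finset.sum_congr rfl fun i _ => by simp only [pinwheelTile, area]; ring
  have hgap (j : ℕ) : ∑ i ∈ Finset.range I, (pinwheelTile x y (.inr (i, j))).area =
      bot (j + 1) - top j := by
    have := sum_range_mul_diff_by_parts (fun i => x i j - x i (j + 1)) (fun i => y i (j + 1)) I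
    simp only [hx0, hx1, sub_self, zero_mul, zero_sub] at this
    simp only [pinwheelTile, area]
    rw [this, htop, hbot]
    simp only
    rw [← Finset.sum_sub_distrib, ← Finset.sum_neg_distrib]
    exact Finset.sum_congr rfl fun i _ => by ring
  have htel : ∀ J' : ℕ, ∑ j ∈ Finset.range (J' + 1), (top j - bot j) +
      ∑ j ∈ Finset.range J', (bot (j + 1) - top j) = top J' - bot 0 := by
    intro J'
    induction J' with
    | zero => simp
    | succ J' ih =>
      rw [Finset.sum_range_succ, Finset.sum_range_succ (fun j => bot (j + 1) - top j)]
      linarith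
  rw [Finset.sum_product_right, Finset.sum_product_right]
  simp only [hcell, hgap, htel]
  have hlen (j : ℕ) : ∑ i ∈ Finset.range (I + 1), (x (i + 1) j - x i j) = X1 - X0 := by
    rw [Finset.sum_range_sub (fun i => x i j), hx0, hx1]
  rw [htop, hbot]
  simp only [hy0, hy1, ← Finset.sum_mul, hlen]
  ring

/-- Partial sums of `τ` started at `Z0`, with the value `Z1` beyond the index `N`. -/
noncomputable def stackCoord (Z0 Z1 : ℝ) (N : ℕ) (τ : ℕ → ℝ) (i : ℕ) : ℝ :=
  if i ≤ N then Z0 + ∑ k ∈ Finset.range i, τ k else Z1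

section stackCoord

variable {Z0 Z1 : ℝ} {N : ℕ} {τ τ' : ℕ → ℝ}

lemma stackCoord_zero : stackCoord Z0 Z1 N τ 0 = Z0 := by simp [stackCoord]

lemma stackCoord_last : stackCoord Z0 Z1 N τ (N + 1) = Z1 := by simp [stackCoord]

lemma stackCoord_succ_sub {i : ℕ} (hi : i < N) :
    stackCoord Z0 Z1 N τ (i + 1) - stackCoord Z0 Z1 N τ i = τ i := by
  rw [stackCoord, stackCoord, if_pos (by omega), if_pos (by omega), Finset.sum_range_succ]
  ring

lemma stackCoord_monotone (hτ : ∀ i, 0 ≤ τ i) (hZ : Z0 + ∑ k ∈ Finset.range N, τ k ≤ Z1) :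
    Monotone (stackCoord Z0 Z1 N τ) := by
  intro i i' hii
  unfold stackCoord
  have hmono : ∀ {p q : ℕ}, p ≤ q → ∑ k ∈ Finset.range p, τ k ≤ ∑ k ∈ Finset.range q, τ k :=
    fun hpq => Finset.sum_le_sum_of_subset_of_nonneg (Finset.range_mono hpq)
      fun k _ _ => hτ k
  split_ifs with h1 h2 h2
  · linarith [hmono hii]
  · linarith [hmono h1]
  · omega
  · exact le_rfl

lemma stackCoord_le_stackCoord (h : ∀ i < N, τ i ≤ τ' i) (i : ℕ) :
    stackCoord Z0 Z1 N τ i ≤ stackCoord Z0 Z1 N τ' i := by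
  unfold stackCoord
  split_ifs with h1
  · have := Finset.sum_le_sum (s := Finset.range i) (f := τ) (g := τ')
      fun k hk => h k ((Finset.mem_range.1 hk).trans_le h1)
    linarith
  · exact le_rfl

lemma stackCoord_le {c : ℝ} (h : ∀ i < N, τ i ≤ c) {i : ℕ} (hi : i ≤ N) :
    stackCoord Z0 Z1 N τ i ≤ Z0 + i * c := by
  have := Finset.sum_le_card_nsmul (Finset.range i) τ c
    fun k hk => h k ((Finset.mem_range.1 hk).trans_le hi)
  rw [stackCoord, if_pos hi]
  simp at this
  linarith

lemma le_stackCoord {c e : ℝ} (h : ∀ i < N, N * (c - τ i) ≤ e) (hc : ∀ i < N, τ i ≤ c)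
    (he : 0 ≤ e) {i : ℕ} (hi : i ≤ N) :
    Z0 + i * c - e ≤ stackCoord Z0 Z1 N τ i := by
  rw [stackCoord, if_pos hi]
  rcases Nat.eq_zero_or_pos N with rfl | hN
  · obtain rfl : i = 0 := by omega
    simpa using he
  have hN' : (0 : ℝ) < N := by exact_mod_cast hN
  have h1 : ∑ k ∈ Finset.range i, (c - τ k) ≤ ∑ k ∈ Finset.range N, (c - τ k) :=
    Finset.sum_le_sum_of_subset_of_nonneg (Finset.range_mono hi)
      fun k hk _ => sub_nonneg.2 (hc k (Finset.mem_range.1 hk))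
  have h2 := Finset.sum_le_card_nsmul (Finset.range N) (fun k => c - τ k) (e / N)
    fun k hk => by
      rw [le_div_iff₀ hN']
      linarith [h k (Finset.mem_range.1 hk)]
  have h3 : ∑ k ∈ Finset.range i, (c - τ k) = i * c - ∑ k ∈ Finset.range i, τ k := by
    simp
  simp only [Finset.card_range, nsmul_eq_mul, mul_div_cancel₀ e hN'.ne'] at h2
  linarith

end stackCoord

lemma sum_range_mul_eq (F : ℕ → ℝ) (I J : ℕ) :
    ∑ k ∈ Finset.range (I * J), F k =
      ∑ j ∈ Finset.range J, ∑ i ∈ Finset.range I, F (j * I + (I - 1 - i)) := by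
  induction J with
  | zero => simp
  | succ J ih =>
    rw [Nat.mul_succ, Finset.sum_range_add, ih, Finset.sum_range_succ]
    congr 1
    rw [← Finset.sum_range_reflect, Nat.mul_comm]

lemma rpow_two_mul_le {δ q : ℝ} (hδ : δ ≤ 1) (hq : 0 ≤ q) :
    (2 * q) ^ δ * (2 * q) ≤ 4 * (q ^ δ * q) := by
  rw [Real.mul_rpow two_pos.le hq]
  have h2 : (2 : ℝ) ^ δ ≤ 2 := by
    simpa using Real.rpow_le_rpow_of_exponent_le one_le_two hδ
  have := mul_nonneg (Real.rpow_nonneg hq δ) hq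
  nlinarith

/-- Pinwheel packing of a nearly constant decreasing sequence of squares into a box that is
only slightly larger than an `I × J` grid of such squares. -/
theorem exists_pinwheel_packing {g : ℕ → ℝ} (hg : Antitone g) (hpos : ∀ k, 0 < g k) {I J : ℕ}
    (hI : 0 < I) (hJ : 0 < J) {δ e : ℝ} (hδ0 : 0 ≤ δ) (hδ1 : δ ≤ 1) (he : e ≤ g 0)
    (heI : ∀ k < I * J, I * (g 0 - g k) ≤ e) (heJ : ∀ k < I * J, J * (g 0 - g k) ≤ e)
    {B : Box} (hw₁ : I * g 0 ≤ B.x1 - B.x0) (hw₂ : B.x1 - B.x0 ≤ (I + 1) * g 0)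
    (hh₁ : J * g 0 ≤ B.y1 - B.y0) (hh₂ : B.y1 - B.y0 ≤ (J + 1) * g 0) :
    ∃ (W : List Box) (pos : ℕ → ℝ × ℝ),
      (∀ R ∈ W, R.Valid ∧ R.Within B) ∧ W.Pairwise Apart ∧
      (∀ k < I * J, square (pos k) (g k) ⊆ B.carrier) ∧
      (∀ k < I * J, ∀ R ∈ W,
        Disjoint (interior (square (pos k) (g k))) (interior R.carrier)) ∧
      (∀ k < I * J, ∀ k' < I * J, k ≠ k' →
        Disjoint (interior (square (pos k) (g k))) (interior (square (pos k') (g k')))) ∧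
      (W.map area).sum + ∑ k ∈ Finset.range (I * J), g k ^ 2 = B.area ∧
      (W.map (perimPow δ)).sum ≤
        4 * (I + J + 1) * (g 0 ^ δ * g 0) + I * J * (g 0 ^ δ * e) := by
  set σ : ℕ → ℕ → ℝ := fun i j => g (j * I + (I - 1 - i)) with hσ
  set x : ℕ → ℕ → ℝ := fun i j =>
    stackCoord B.x0 B.x1 I (fun i' => σ i' (min j (J - 1))) i with hx
  set y : ℕ → ℕ → ℝ := fun i j =>
    stackCoord B.y0 B.y1 J (fun j' => σ (min i (I - 1)) j') j with hy
  have hIJ : 0 < I * J := Nat.mul_pos hI hJ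
  have he0 : 0 ≤ e := by simpa using heI 0 hIJ
  have hg0 : 0 < g 0 := hpos 0
  have hσ0 (i j : ℕ) : 0 ≤ σ i j := (hpos _).le
  have hσle (i j : ℕ) : σ i j ≤ g 0 := hg (Nat.zero_le _)
  have hidx {i j : ℕ} (hj : j < J) : j * I + (I - 1 - i) < I * J := by
    have : (j + 1) * I ≤ J * I := Nat.mul_le_mul_right _ hj
    rw [Nat.mul_comm I J]
    rw [Nat.add_mul] at this
    omega
  have hxsum (τ : ℕ → ℝ) (hτ : ∀ i, τ i ≤ g 0) : B.x0 + ∑ k ∈ Finset.range I, τ k ≤ B.x1 := by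
    have := Finset.sum_le_card_nsmul (Finset.range I) τ (g 0) fun k _ => hτ k
    simp at this
    linarith
  have hysum (τ : ℕ → ℝ) (hτ : ∀ i, τ i ≤ g 0) : B.y0 + ∑ k ∈ Finset.range J, τ k ≤ B.y1 := by
    have := Finset.sum_le_card_nsmul (Finset.range J) τ (g 0) fun k _ => hτ k
    simp at this
    linarith
  have hP : IsPinwheel x y :=
    { x_mono := fun j => stackCoord_monotone (fun _ => hσ0 _ _) (hxsum _ fun _ => hσle _ _)
      x_anti := fun i j j' hjj => stackCoord_le_stackCoord (fun i' _ => hg (by gcongr)) i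
      y_mono_left := fun j i i' hii =>
        stackCoord_le_stackCoord (fun j' _ => hg (by gcongr)) j
      y_mono := fun i => stackCoord_monotone (fun _ => hσ0 _ _) (hysum _ fun _ => hσle _ _) }
  have hx0 (j : ℕ) : x 0 j = B.x0 := stackCoord_zero
  have hx1 (j : ℕ) : x (I + 1) j = B.x1 := stackCoord_last
  have hy0 (i : ℕ) : y i 0 = B.y0 := stackCoord_zero
  have hy1 (i : ℕ) : y i (J + 1) = B.y1 := stackCoord_last
  have hxle {i : ℕ} (j : ℕ) (hi : i ≤ I) : x i j ≤ B.x0 + i * g 0 :=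
    stackCoord_le (fun _ _ => hσle _ _) hi
  have hyle (i : ℕ) {j : ℕ} (hj : j ≤ J) : y i j ≤ B.y0 + j * g 0 :=
    stackCoord_le (fun _ _ => hσle _ _) hj
  have hlex {i : ℕ} (j : ℕ) (hi : i ≤ I) : B.x0 + i * g 0 - e ≤ x i j :=
    le_stackCoord (fun _ _ => heI _ (hidx (by omega))) (fun _ _ => hσle _ _) he0 hi
  have hley (i : ℕ) {j : ℕ} (hj : j ≤ J) : B.y0 + j * g 0 - e ≤ y i j :=
    le_stackCoord (fun _ hj' => heJ _ (hidx hj')) (fun _ _ => hσle _ _) he0 hj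
  have hxstep {i j : ℕ} (hi : i < I) (hj : j < J) : x (i + 1) j - x i j = σ i j := by
    rw [hx]
    simp only
    rw [stackCoord_succ_sub hi, min_eq_left (by omega)]
  have hystep {i j : ℕ} (hi : i < I) (hj : j < J) : y i (j + 1) - y i j = σ i j := by
    rw [hy]
    simp only
    rw [stackCoord_succ_sub hj, min_eq_left (by omega)]
  have hxwidth {i : ℕ} (j : ℕ) (hi : i ≤ I) : x (i + 1) j - x i j ≤ 2 * g 0 := by
    rcases hi.lt_or_eq with hi | rfl
    · rw [hx]
      simp only
      rw [stackCoord_succ_sub hi]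
      linarith [hσle i (min j (J - 1))]
    · have := hlex j le_rfl
      rw [hx1]
      linarith
  have hyheight (i : ℕ) {j : ℕ} (hj : j ≤ J) : y i (j + 1) - y i j ≤ 2 * g 0 := by
    rcases hj.lt_or_eq with hj | rfl
    · rw [hy]
      simp only
      rw [stackCoord_succ_sub hj]
      linarith [hσle (min i (I - 1)) j]
    · have := hley i le_rfl
      rw [hy1]
      linarith
  have hwithin {i i' j j' : ℕ} (hi : i' ≤ I + 1) (hj : j' ≤ J + 1) :
      B.x0 ≤ x i j ∧ x i' j ≤ B.x1 ∧ B.y0 ≤ y i j ∧ y i j' ≤ B.y1 := by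
    refine ⟨?_, ?_, ?_, ?_⟩
    · rw [← hx0 j]; exact hP.x_le (Nat.zero_le _) le_rfl
    · rw [← hx1 j]; exact hP.x_le hi le_rfl
    · rw [← hy0 i]; exact hP.y_le le_rfl (Nat.zero_le _)
    · rw [← hy1 i]; exact hP.y_le le_rfl hj
  set inner : Finset (ℕ × ℕ) := Finset.range I ×ˢ Finset.range J with hinner
  set full : Finset (ℕ × ℕ) := Finset.range (I + 1) ×ˢ Finset.range (J + 1) with hfull
  have hsub : inner ⊆ full := Finset.product_subset_product
    (Finset.range_mono (Nat.le_succ _)) (Finset.range_mono (Nat.le_succ _))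
  set waste : Finset ((ℕ × ℕ) ⊕ (ℕ × ℕ)) := (full \ inner).disjSum inner with hwaste
  have hsquare {i j : ℕ} (hi : i < I) (hj : j < J) :
      square (x i j, y i j) (σ i j) = (pinwheelTile x y (.inl (i, j))).carrier := by
    simp only [square, pinwheelTile, carrier]
    rw [show x i j + σ i j = x (i + 1) j by linarith [hxstep hi hj],
      show y i j + σ i j = y i (j + 1) by linarith [hystep hi hj]]
  set ix : ℕ → ℕ × ℕ := fun k => (I - 1 - k % I, k / I) with hix
  have hix_lt {k : ℕ} (hk : k < I * J) : (ix k).1 < I ∧ (ix k).2 < J :=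
    ⟨by simp only [hix]; omega, by simp only [hix]; exact Nat.div_lt_of_lt_mul hk⟩
  have hix_inv (k : ℕ) : (ix k).2 * I + (I - 1 - (ix k).1) = k := by
    have h1 := Nat.mod_lt k hI
    have h2 := Nat.div_add_mod' k I
    simp only [hix]
    omega
  have hpos_eq {k : ℕ} (hk : k < I * J) :
      square (x (ix k).1 (ix k).2, y (ix k).1 (ix k).2) (g k) =
        (pinwheelTile x y (.inl (ix k))).carrier := by
    rw [← show σ (ix k).1 (ix k).2 = g k from congrArg g (hix_inv k)]
    exact hsquare (hix_lt hk).1 (hix_lt hk).2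
  have hmem_inner {k : ℕ} (hk : k < I * J) : ix k ∈ inner :=
    Finset.mem_product.2 ⟨Finset.mem_range.2 (hix_lt hk).1, Finset.mem_range.2 (hix_lt hk).2⟩
  refine ⟨waste.toList.map (pinwheelTile x y),
    fun k => (x (ix k).1 (ix k).2, y (ix k).1 (ix k).2), ?_, ?_, ?_, ?_, ?_, ?_, ?_⟩
  · intro R hR
    obtain ⟨q, hq, rfl⟩ := List.mem_map.1 hR
    refine ⟨hP.valid q, ?_⟩
    rw [Finset.mem_toList] at hq
    rcases q with ⟨i, j⟩ | ⟨i, j⟩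
    · simp only [hwaste, Finset.inl_mem_disjSum, Finset.mem_sdiff, hfull, Finset.mem_product,
        Finset.mem_range] at hq
      exact hwithin (by omega) (by omega)
    · simp only [hwaste, Finset.inr_mem_disjSum, hinner, Finset.mem_product,
        Finset.mem_range] at hq
      exact ⟨(hwithin (i' := 0) (j' := 0) (by omega) (by omega)).1,
        (hwithin (i := 0) (j' := 0) (by omega) (by omega)).2.1,
        (hwithin (i' := 0) (j' := 0) (by omega) (by omega)).2.2.1,
        (hwithin (i' := 0) (j := 0) (by omega) (by omega)).2.2.2⟩
  · rw [List.pairwise_map]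
    exact (Finset.nodup_toList waste).imp fun hqr => hP.apart hqr
  · intro k hk
    rw [hpos_eq hk]
    exact Within.subset (hwithin (Nat.succ_le_succ (hix_lt hk).1.le)
      (Nat.succ_le_succ (hix_lt hk).2.le))
  · intro k hk R hR
    obtain ⟨q, hq, rfl⟩ := List.mem_map.1 hR
    rw [hpos_eq hk]
    apply hP.apart
    rintro rfl
    rw [Finset.mem_toList, hwaste, Finset.inl_mem_disjSum, Finset.mem_sdiff] at hq
    exact hq.2 (hmem_inner hk)
  · intro k hk k' hk' hkk
    rw [hpos_eq hk, hpos_eq hk']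
    apply hP.apart
    intro hq
    apply hkk
    rw [← hix_inv k, ← hix_inv k', Sum.inl.inj hq]
  · have hA := sum_pinwheelTile_area hx0 hx1 hy0 hy1
    rw [← hfull, ← hinner, ← Finset.sum_sdiff hsub] at hA
    have hB : ∑ q ∈ inner, (pinwheelTile x y (.inl q)).area =
        ∑ k ∈ Finset.range (I * J), g k ^ 2 := by
      rw [sum_range_mul_eq, hinner, Finset.sum_product_right]
      refine Finset.sum_congr rfl fun j hj => Finset.sum_congr rfl fun i hi => ?_
      rw [Finset.mem_range] at hi hj
      simp only [pinwheelTile, area]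
      rw [hxstep hi hj, hystep hi hj, sq]
    rw [List.map_map, Finset.sum_map_toList, hwaste, Finset.sum_disjSum]
    simp only [Function.comp]
    rw [area]
    linarith
  · rw [List.map_map, Finset.sum_map_toList, hwaste, Finset.sum_disjSum]
    have hcard : (full \ inner).card = I + J + 1 := by
      rw [Finset.card_sdiff_of_subset hsub, hfull, hinner]
      simp only [Finset.card_product, Finset.card_range]
      rw [show (I + 1) * (J + 1) = I * J + (I + J + 1) by ring]
      omega
    have h1 := Finset.sum_le_card_nsmul (full \ inner)
      (fun q => (perimPow δ ∘ pinwheelTile x y) (.inl q)) (4 * (g 0 ^ δ * g 0)) fun q hq => by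
        obtain ⟨i, j⟩ := q
        simp only [Finset.mem_sdiff, hfull, Finset.mem_product, Finset.mem_range] at hq
        refine (perimPow_le hδ0 (hP.valid _) (hxwidth j (by omega))
          (hyheight i (by omega))).trans ?_
        rw [min_self, max_self]
        exact rpow_two_mul_le hδ1 hg0.le
    have h2 := Finset.sum_le_card_nsmul inner
      (fun q => (perimPow δ ∘ pinwheelTile x y) (.inr q)) (g 0 ^ δ * e) fun q hq => by
        obtain ⟨i, j⟩ := q
        simp only [hinner, Finset.mem_product, Finset.mem_range] at hq
        refine (perimPow_le hδ0 (hP.valid _) (u := e) (v := e) ?_ ?_).trans ?_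
        · have h3 := hxle (i := i + 1) j (by omega)
          have h4 := hlex (i := i + 1) (j + 1) (by omega)
          simp only [pinwheelTile]
          linarith
        · have h3 := hyle (i + 1) (j := j + 1) (by omega)
          have h4 := hley i (j := j + 1) (by omega)
          simp only [pinwheelTile]
          linarith
        · rw [min_self, max_self]
          exact mul_le_mul_of_nonneg_right (Real.rpow_le_rpow he0 he hδ0) he0
    rw [hcard] at h1
    rw [hinner, Finset.card_product, Finset.card_range, Finset.card_range, ← hinner] at h2
    simp only [nsmul_eq_mul] at h1 h2
    push_cast at h1 h2
    linarith

/-- Squares of sidelengths `s k`, `n ≤ k < nmax`, can be packed into the boxes of `L`,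
each square lying in a single box. -/
def Packs (s : ℕ → ℝ) (n nmax : ℕ) (L : List Box) : Prop :=
  ∃ pos : ℕ → ℝ × ℝ,
    (∀ k, n ≤ k → k < nmax → ∃ R ∈ L, square (pos k) (s k) ⊆ R.carrier) ∧
    ∀ k k', n ≤ k → k < nmax → n ≤ k' → k' < nmax → k ≠ k' →
      Disjoint (interior (square (pos k) (s k))) (interior (square (pos k') (s k')))

lemma Packs.mono {s : ℕ → ℝ} {n nmax : ℕ} {L L' : List Box} (h : Packs s n nmax L)
    (hL : ∀ R ∈ L, ∃ R' ∈ L', R.carrier ⊆ R'.carrier) : Packs s n nmax L' := by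
  obtain ⟨pos, h1, h2⟩ := h
  refine ⟨pos, fun k hk hk' => ?_, h2⟩
  obtain ⟨R, hR, hRs⟩ := h1 k hk hk'
  obtain ⟨R', hR', hRR⟩ := hL R hR
  exact ⟨R', hR', hRs.trans hRR⟩

/-- If the first `N` squares fit in `B` away from the sub-boxes `W`, it remains to pack the other
squares into `W` and the boxes other than `B`. -/
lemma Packs.of_block {s : ℕ → ℝ} {n N nmax : ℕ} {B : Box} {W L : List Box} {pos : ℕ → ℝ × ℝ}
    (hW : ∀ R ∈ W, R.Within B) (hsub : ∀ k < N, square (pos k) (s (n + k)) ⊆ B.carrier)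
    (hposW : ∀ k < N, ∀ R ∈ W,
      Disjoint (interior (square (pos k) (s (n + k)))) (interior R.carrier))
    (hpos : ∀ k < N, ∀ k' < N, k ≠ k' →
      Disjoint (interior (square (pos k) (s (n + k)))) (interior (square (pos k') (s (n + k')))))
    (hL : ∀ R ∈ L, B.Apart R) (h : Packs s (n + N) nmax (W ++ L)) :
    Packs s n nmax (B :: L) := by
  obtain ⟨pos', h1, h2⟩ := h
  have hcross : ∀ k < N, ∀ k', n + N ≤ k' → k' < nmax →
      Disjoint (interior (square (pos k) (s (n + k)))) (interior (square (pos' k') (s k'))) := by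
    intro k hk k' hk1 hk2
    obtain ⟨R, hR, hRs⟩ := h1 k' hk1 hk2
    rcases List.mem_append.1 hR with hR | hR
    · exact (hposW k hk R hR).mono_right (interior_mono hRs)
    · exact Disjoint.mono (interior_mono (hsub k hk)) (interior_mono hRs) (hL R hR)
  refine ⟨fun k => if k < n + N then pos (k - n) else pos' k, ?_, ?_⟩
  · intro k hk1 hk2
    by_cases hk : k < n + N
    · obtain ⟨j, rfl⟩ := Nat.exists_eq_add_of_le hk1
      refine ⟨B, List.mem_cons_self, ?_⟩
      simpa [hk] using hsub j (by omega)
    · obtain ⟨R, hR, hRs⟩ := h1 k (by omega) hk2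
      rcases List.mem_append.1 hR with hR | hR
      · exact ⟨B, List.mem_cons_self, by simpa [hk] using hRs.trans (hW R hR).subset⟩
      · exact ⟨R, List.mem_cons_of_mem _ hR, by simpa [hk] using hRs⟩
  · intro k k' hk1 hk2 hk1' hk2' hne
    obtain ⟨j, rfl⟩ := Nat.exists_eq_add_of_le hk1
    obtain ⟨j', rfl⟩ := Nat.exists_eq_add_of_le hk1'
    by_cases hj : j < N <;> by_cases hj' : j' < N
    · simpa [hj, hj'] using hpos j hj j' hj' (by omega)
    · simpa [hj, hj'] using hcross j hj (n + j') (by omega) hk2'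
    · simpa [hj, hj'] using (hcross j' hj' (n + j) (by omega) hk2).symm
    · simpa [hj, hj'] using h2 (n + j) (n + j') (by omega) hk2 (by omega) hk2' hne

/-- Pairwise non-overlapping boxes with sidelengths at most one. -/
def Admissible (L : List Box) : Prop :=
  (∀ R ∈ L, R.Valid ∧ R.x1 - R.x0 ≤ 1 ∧ R.y1 - R.y0 ≤ 1) ∧ L.Pairwise Apart

lemma Admissible.refine {B : Box} {W L : List Box} (h : Admissible (B :: L))
    (hW : ∀ R ∈ W, R.Valid ∧ R.Within B) (hWp : W.Pairwise Apart) : Admissible (W ++ L) := by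
  obtain ⟨h1, h2⟩ := h
  rw [List.pairwise_cons] at h2
  refine ⟨fun R hR => ?_, List.pairwise_append.2 ⟨hWp, h2.2, fun R hR R' hR' => ?_⟩⟩
  · rcases List.mem_append.1 hR with hR | hR
    · obtain ⟨h3, h4, h5, h6, h7⟩ := hW R hR
      obtain ⟨-, h8, h9⟩ := h1 B List.mem_cons_self
      exact ⟨h3, by linarith, by linarith⟩
    · exact h1 R (List.mem_cons_of_mem _ hR)
  · exact (h2.1 R' hR').mono (hW R hR).2.subset subset_rfl

lemma Admissible.perm {L L' : List Box} (h : Admissible L) (hL : L.Perm L') : Admissible L' :=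
  ⟨fun R hR => h.1 R (hL.mem_iff.2 hR), (hL.pairwise_iff fun hab => hab.symm).1 h.2⟩

lemma Admissible.area_nonneg {L : List Box} (h : ∀ R ∈ L, R.Valid) : 0 ≤ (L.map area).sum := by
  apply List.sum_nonneg
  intro u hu
  obtain ⟨R, hR, rfl⟩ := List.mem_map.1 hu
  exact (h R hR).area_nonneg

section oriented

variable {o : Bool} {u0 u1 v0 v1 u0' u1' v0' v1' : ℝ}

lemma Box.area_oriented : (oriented o u0 u1 v0 v1).area = (u1 - u0) * (v1 - v0) := by
  cases o <;> simp [oriented, area, mul_comm]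

lemma Box.valid_oriented_iff : (oriented o u0 u1 v0 v1).Valid ↔ u0 ≤ u1 ∧ v0 ≤ v1 := by
  cases o <;> simp [oriented, Valid, and_comm]

lemma Box.oriented_within (h1 : u0' ≤ u0) (h2 : u1 ≤ u1') (h3 : v0' ≤ v0) (h4 : v1 ≤ v1') :
    (oriented o u0 u1 v0 v1).Within (oriented o u0' u1' v0' v1') := by
  cases o
  · exact ⟨h3, h4, h1, h2⟩
  · exact ⟨h1, h2, h3, h4⟩

lemma Box.oriented_apart (h : u1 ≤ u0' ∨ v1 ≤ v0') :
    (oriented o u0 u1 v0 v1).Apart (oriented o u0' u1' v0' v1') := by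
  apply apart_of_separated
  cases o <;> simp only [oriented] <;> grind

lemma Box.exists_oriented (R : Box) :
    ∃ o u0 u1 v0 v1, R = oriented o u0 u1 v0 v1 ∧ u1 - u0 ≤ v1 - v0 ∧
      u1 - u0 = min (R.x1 - R.x0) (R.y1 - R.y0) := by
  rcases le_total (R.x1 - R.x0) (R.y1 - R.y0) with h | h
  · exact ⟨true, R.x0, R.x1, R.y0, R.y1, rfl, h, (min_eq_left h).symm⟩
  · exact ⟨false, R.y0, R.y1, R.x0, R.x1, rfl, h, (min_eq_right h).symm⟩

end oriented

lemma Box.area_le_perimPow_mul {δ c : ℝ} (hδ0 : 0 ≤ δ) (hδ1 : δ ≤ 1) {R : Box} (hR : R.Valid)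
    (hc : min (R.x1 - R.x0) (R.y1 - R.y0) ≤ c) :
    R.area ≤ R.perimPow δ * c ^ (1 - δ) := by
  have h1 := sub_nonneg.2 hR.1
  have h2 := sub_nonneg.2 hR.2
  unfold perimPow area
  rw [← min_mul_max (R.x1 - R.x0)]
  set w := min (R.x1 - R.x0) (R.y1 - R.y0)
  have hw : 0 ≤ w := le_min h1 h2
  have hm : 0 ≤ max (R.x1 - R.x0) (R.y1 - R.y0) := le_max_of_le_left h1
  have h3 : w = w ^ δ * w ^ (1 - δ) := by
    rw [← Real.rpow_add_of_nonneg hw hδ0 (by linarith)]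
    simp
  have h4 : w ^ (1 - δ) ≤ c ^ (1 - δ) := Real.rpow_le_rpow hw hc (by linarith)
  calc w * max (R.x1 - R.x0) (R.y1 - R.y0)
      = w ^ δ * max (R.x1 - R.x0) (R.y1 - R.y0) * w ^ (1 - δ) := by
        conv_lhs => rw [h3]
        ring
    _ ≤ _ := mul_le_mul_of_nonneg_left h4 (mul_nonneg (Real.rpow_nonneg hw _) hm)

/-- Quantitative properties of the sidelengths `s`, their tail areas `T`, and the perimeter
budget `P` which suffice to run the packing algorithm with grid parameter `M`. -/
structure SlowSequence (δ : ℝ) (M N₀ : ℕ) (s T P : ℕ → ℝ) : Prop where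
  δ_nonneg : 0 ≤ δ
  δ_le_one : δ ≤ 1
  M_pos : 0 < M
  pos : ∀ n, N₀ ≤ n → 0 < s n
  anti : ∀ n n', N₀ ≤ n → n ≤ n' → s n' ≤ s n
  slow : ∀ n, N₀ ≤ n → ∀ k ≤ 4 * M ^ 2, s n - s n / (528 * (M : ℝ) ^ 2) ≤ s (n + k)
  tail : ∀ n, N₀ ≤ n → T n = s n ^ 2 + T (n + 1)
  budget : ∀ n, N₀ ≤ n → P n + 50 / M * (s n ^ δ * s n) ≤ P (n + 1)
  wide : ∀ n, N₀ ≤ n → P n * (M * s n) ^ (1 - δ) < T n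
  strip : ∀ n₀ n : ℕ, N₀ ≤ n₀ → n₀ ≤ n → ((n : ℝ) - n₀) * s n₀ ≤ 2 * M → 81 / 100 * s n₀ ≤ s n

namespace SlowSequence

variable {δ : ℝ} {M N₀ : ℕ} {s T P : ℕ → ℝ}

lemma sum_sq (h : SlowSequence δ M N₀ s T P) {n : ℕ} (hn : N₀ ≤ n) (N : ℕ) :
    ∑ k ∈ Finset.range N, s (n + k) ^ 2 = T n - T (n + N) := by
  induction N with
  | zero => simp
  | succ N ih =>
    rw [Finset.sum_range_succ, ih]
    have := h.tail (n + N) (by omega)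
    rw [← Nat.add_assoc]
    linarith

lemma sum_budget (h : SlowSequence δ M N₀ s T P) {n : ℕ} (hn : N₀ ≤ n) (N : ℕ) :
    ∑ k ∈ Finset.range N, 50 / M * (s (n + k) ^ δ * s (n + k)) ≤ P (n + N) - P n := by
  induction N with
  | zero => simp
  | succ N ih =>
    rw [Finset.sum_range_succ]
    have := h.budget (n + N) (by omega)
    rw [← Nat.add_assoc]
    linarith

theorem exists_block (h : SlowSequence δ M N₀ s T P) {n : ℕ} (hn : N₀ ≤ n) {B : Box}
    (hw₁ : M * s n ≤ B.x1 - B.x0) (hw₂ : B.x1 - B.x0 ≤ 2 * M * s n)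
    (hh₁ : M * s n ≤ B.y1 - B.y0) (hh₂ : B.y1 - B.y0 ≤ 2 * M * s n) :
    ∃ (N : ℕ) (W : List Box), 0 < N ∧ N ≤ 4 * M ^ 2 ∧ (∀ R ∈ W, R.Valid ∧ R.Within B) ∧
      W.Pairwise Apart ∧ (W.map area).sum + (T n - T (n + N)) = B.area ∧
      (W.map (perimPow δ)).sum ≤ P (n + N) - P n ∧
      ∀ (nmax : ℕ) (L : List Box), (∀ R ∈ L, B.Apart R) →
        Packs s (n + N) nmax (W ++ L) → Packs s n nmax (B :: L) := by
  have hs := h.pos n hn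
  have hM := h.M_pos
  have hM1 : (1 : ℝ) ≤ M := by exact_mod_cast hM
  have hM0 : (0 : ℝ) < M := by linarith
  have hfloor {d : ℝ} (h1 : M * s n ≤ d) (h2 : d ≤ 2 * M * s n) :
      ∃ I : ℕ, M ≤ I ∧ I ≤ 2 * M ∧ I * s n ≤ d ∧ d ≤ (I + 1) * s n := by
    have hd : 0 ≤ d / s n := div_nonneg (by nlinarith) hs.le
    refine ⟨⌊d / s n⌋₊, Nat.le_floor ((le_div_iff₀ hs).2 h1), ?_, ?_, ?_⟩
    · have : d / s n ≤ (2 * M : ℕ) := by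
        rw [div_le_iff₀ hs]
        push_cast
        exact h2
      exact Nat.floor_le_of_le this
    · exact (le_div_iff₀ hs).1 (Nat.floor_le hd)
    · exact (div_le_iff₀ hs).1 (Nat.lt_floor_add_one _).le
  obtain ⟨I, hMI, hIM, hI₁, hI₂⟩ := hfloor hw₁ hw₂
  obtain ⟨J, hMJ, hJM, hJ₁, hJ₂⟩ := hfloor hh₁ hh₂
  have hNle : I * J ≤ 4 * M ^ 2 := (Nat.mul_le_mul hIM hJM).trans (by ring_nf; rfl)
  have hMIr : (M : ℝ) ≤ I := by exact_mod_cast hMI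
  have hMJr : (M : ℝ) ≤ J := by exact_mod_cast hMJ
  have hIMr : (I : ℝ) ≤ 2 * M := by exact_mod_cast hIM
  have hJMr : (J : ℝ) ≤ 2 * M := by exact_mod_cast hJM
  have hgap {k : ℕ} (hk : k ≤ I * J) : s n - s (n + k) ≤ s n / (528 * (M : ℝ) ^ 2) := by
    linarith [h.slow n hn k (hk.trans hNle)]
  have hε0 : 0 ≤ s n / (528 * (M : ℝ) ^ 2) := by positivity
  have hloss {K : ℝ} (hK0 : 0 ≤ K) (hK : K ≤ 2 * M) {k : ℕ} (hk : k < I * J) :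
      K * (s n - s (n + k)) ≤ s n / (264 * M) := by
    calc K * (s n - s (n + k)) ≤ (2 * M) * (s n / (528 * (M : ℝ) ^ 2)) :=
          mul_le_mul hK (hgap hk.le) (sub_nonneg.2 (h.anti n _ hn (by omega))) (by positivity)
      _ = s n / (264 * M) := by field_simp; norm_num
  obtain ⟨W, pos, hW, hWp, hsub, hposW, hpos, harea, hperim⟩ :=
    exists_pinwheel_packing (g := fun k => s (n + k)) (I := I) (J := J) (δ := δ)
      (e := s n / (264 * M)) (B := B) (fun k k' hk => h.anti _ _ (by omega) (by omega))
      (fun k => h.pos _ (by omega)) (hM.trans_le hMI) (hM.trans_le hMJ) h.δ_nonneg h.δ_le_one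
      (div_le_self hs.le (by nlinarith)) (fun k hk => hloss (by positivity) hIMr hk)
      (fun k hk => hloss (by positivity) hJMr hk) hI₁ hI₂ hJ₁ hJ₂
  refine ⟨I * J, W, Nat.mul_pos (hM.trans_le hMI) (hM.trans_le hMJ), hNle, hW, hWp, ?_, ?_, ?_⟩
  · rw [← h.sum_sq hn]
    exact harea
  · refine (hperim.trans ?_).trans (h.sum_budget hn (I * J))
    have hmin : ∀ k < I * J, 99 / 100 * s n ≤ s (n + k) := by
      intro k hk
      have h1 := hgap hk.le
      have h2 : s n / (528 * (M : ℝ) ^ 2) ≤ s n / 528 :=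
        div_le_div_of_nonneg_left hs.le (by norm_num) (by nlinarith)
      linarith
    have h99 : (99 / 100 : ℝ) ≤ (99 / 100 : ℝ) ^ δ := by
      simpa using Real.rpow_le_rpow_of_exponent_ge (x := 99 / 100) (by norm_num) (by norm_num)
        h.δ_le_one
    have hsδ : 0 ≤ s n ^ δ := Real.rpow_nonneg hs.le _
    set Q := s n ^ δ * s n with hQ
    have hQ0 : 0 ≤ Q := mul_nonneg hsδ hs.le
    have hterm : ∀ k ∈ Finset.range (I * J),
        49 / M * Q ≤ 50 / M * (s (n + k) ^ δ * s (n + k)) := by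
      intro k hk
      have h1 := hmin k (Finset.mem_range.1 hk)
      have h2 : (99 / 100 * s n) ^ δ ≤ s (n + k) ^ δ :=
        Real.rpow_le_rpow (by positivity) h1 h.δ_nonneg
      rw [Real.mul_rpow (by norm_num) hs.le] at h2
      have h3 : 99 / 100 * s n ^ δ ≤ s (n + k) ^ δ :=
        (mul_le_mul_of_nonneg_right h99 hsδ).trans h2
      have h4 : 99 / 100 * s n ^ δ * (99 / 100 * s n) ≤ s (n + k) ^ δ * s (n + k) :=
        mul_le_mul h3 h1 (by positivity) (Real.rpow_nonneg (h.pos _ (by omega)).le _)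
      rw [div_mul_eq_mul_div, div_mul_eq_mul_div]
      apply div_le_div_of_nonneg_right _ hM0.le
      rw [hQ]
      nlinarith
    have hsum := Finset.card_nsmul_le_sum _ _ _ hterm
    rw [Finset.card_range, nsmul_eq_mul] at hsum
    refine le_trans ?_ hsum
    simp only [Nat.add_zero]
    push_cast
    rw [← hQ]
    have hIJ0 : (0 : ℝ) ≤ I * J := by positivity
    have h5 : (I : ℝ) + J + 1 ≤ 3 * (I * J) / M := by
      rw [le_div_iff₀ hM0]
      nlinarith [mul_nonneg (sub_nonneg.2 hMIr) (sub_nonneg.2 hMJr),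
        mul_nonneg (sub_nonneg.2 hMIr) hM0.le, mul_nonneg (sub_nonneg.2 hMJr) hM0.le]
    have h6 : (I : ℝ) * J * (s n ^ δ * (s n / (264 * M))) = I * J / M * (Q / 264) := by
      rw [hQ]
      field_simp
    rw [h6]
    have h7 : 4 * ((I : ℝ) + J + 1) * Q ≤ 4 * (3 * (I * J) / M) * Q := by gcongr
    have h8 : 0 ≤ (I : ℝ) * J / M * Q := by positivity
    calc 4 * ((I : ℝ) + J + 1) * Q + I * J / M * (Q / 264)
        ≤ 4 * (3 * (I * J) / M) * Q + I * J / M * (Q / 264) := by linarith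
      _ = (12 + 1 / 264) * (I * J / M * Q) := by ring
      _ ≤ 49 * (I * J / M * Q) := by linarith
      _ = _ := by ring
  · intro nmax L hL hpack
    exact Packs.of_block (fun R hR => (hW R hR).2) hsub hposW hpos hL hpack

/-- Every admissible family with the right area and small perimeter receives the squares from
index `n` on. -/
def PacksAll (δ : ℝ) (s T P : ℕ → ℝ) (nmax n : ℕ) : Prop :=
  ∀ L : List Box, Admissible L → (L.map area).sum = T n → (L.map (perimPow δ)).sum ≤ P n →
    Packs s n nmax L

/-- The same for a family together with a partially used strip, opened at index `n₀`, whose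
perimeter is not charged to the budget. -/
def PacksStrip (δ : ℝ) (M N₀ : ℕ) (s T P : ℕ → ℝ) (nmax n : ℕ) : Prop :=
  ∀ (n₀ : ℕ) (o : Bool) (u0 u1 v0 v1 : ℝ) (L : List Box), N₀ ≤ n₀ → n₀ ≤ n →
    Admissible (oriented o u0 u1 v0 v1 :: L) → v1 - v0 = M * s n₀ → M * s n ≤ u1 - u0 →
    81 / 100 * s n₀ ≤ s n → T n₀ - T n + (u1 - u0) * (v1 - v0) ≤ M * s n₀ →
    (L.map area).sum + (u1 - u0) * (v1 - v0) = T n → (L.map (perimPow δ)).sum ≤ P n →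
    Packs s n nmax (oriented o u0 u1 v0 v1 :: L)

/-- A strip whose packed area is at most its initial area is still in its slowly varying range. -/
lemma lower_bound_of_area_le (h : SlowSequence δ M N₀ s T P) {n₀ n k : ℕ} (hn₀ : N₀ ≤ n₀)
    (hn : n₀ ≤ n) (hlow : 81 / 100 * s n₀ ≤ s n) (hk : k ≤ 4 * M ^ 2)
    (harea : T n₀ - T (n + k) ≤ M * s n₀) : 81 / 100 * s n₀ ≤ s (n + k) := by
  have hs0 := h.pos n₀ hn₀
  have hM1 : (1 : ℝ) ≤ M := by exact_mod_cast h.M_pos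
  have h80 : 4 / 5 * s n₀ ≤ s (n + k) := by
    have h1 := h.slow n (hn₀.trans hn) k hk
    have hs := h.pos n (hn₀.trans hn)
    have h2 : s n / (528 * (M : ℝ) ^ 2) ≤ s n / 528 :=
      div_le_div_of_nonneg_left hs.le (by norm_num) (by nlinarith)
    linarith
  apply h.strip n₀ (n + k) hn₀ (by omega)
  obtain ⟨d, hd⟩ := Nat.exists_eq_add_of_le (show n₀ ≤ n + k by omega)
  rw [hd] at harea h80 ⊢
  rw [← h.sum_sq hn₀] at harea
  have h3 := Finset.card_nsmul_le_sum (Finset.range d) (fun i => s (n₀ + i) ^ 2)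
    ((4 / 5 * s n₀) ^ 2) fun i hi => by
      apply pow_le_pow_left₀ (by positivity)
      exact h80.trans (h.anti _ _ (by omega) (by have := Finset.mem_range.1 hi; omega))
  rw [Finset.card_range, nsmul_eq_mul] at h3
  push_cast
  have h4 : (d : ℝ) * s n₀ * (16 / 25) ≤ M := by
    apply le_of_mul_le_mul_right _ hs0
    nlinarith
  nlinarith

lemma packsStrip_of_lt (h : SlowSequence δ M N₀ s T P) {nmax n : ℕ} (hn : N₀ ≤ n)
    (hall : ∀ n', n < n' → PacksAll δ s T P nmax n')
    (hstrip : ∀ n', n < n' → PacksStrip δ M N₀ s T P nmax n') :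
    PacksStrip δ M N₀ s T P nmax n := by
  intro n₀ o u0 u1 v0 v1 L hn₀ hnn hadm hv hu hlow hused harea hperim
  have hs := h.pos n hn
  have hs0 := h.pos n₀ hn₀
  have hM0 : (0 : ℝ) < M := by exact_mod_cast h.M_pos
  have hMs : 0 < M * s n := mul_pos hM0 hs
  have hv₁ : M * s n ≤ v1 - v0 := by
    rw [hv]
    exact mul_le_mul_of_nonneg_left (h.anti _ _ hn₀ hnn) hM0.le
  have hv₂ : v1 - v0 ≤ 2 * M * s n := by
    rw [hv, mul_comm 2 (M : ℝ), mul_assoc]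
    exact mul_le_mul_of_nonneg_left (by linarith) hM0.le
  have hblock (c : ℝ) (hc₁ : M * s n ≤ c - u0) (hc₂ : c - u0 ≤ 2 * M * s n) :=
    h.exists_block hn (B := oriented o u0 c v0 v1) (by cases o; exacts [hv₁, hc₁])
      (by cases o; exacts [hv₂, hc₂]) (by cases o; exacts [hc₁, hv₁])
      (by cases o; exacts [hc₂, hv₂])
  rcases le_or_gt (u1 - u0) (2 * M * s n) with hu₂ | hu₂
  · obtain ⟨N, W, hN, hNM, hW, hWp, hWa, hWδ, hpack⟩ := hblock u1 hu hu₂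
    rw [area_oriented] at hWa
    refine hpack nmax L (List.pairwise_cons.1 hadm.2).1 (hall _ (by omega) _
      (hadm.refine hW hWp) ?_ ?_)
    · rw [List.map_append, List.sum_append]
      linarith
    · rw [List.map_append, List.sum_append]
      linarith
  · set c := u0 + M * s n with hc
    obtain ⟨N, W, hN, hNM, hW, hWp, hWa, hWδ, hpack⟩ := hblock c (by linarith) (by nlinarith)
    rw [area_oriented] at hWa
    have hWa0 := Admissible.area_nonneg fun R hR => (hW R hR).1
    set B := oriented o u0 c v0 v1 with hB
    set S := oriented o c u1 v0 v1 with hS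
    have hcu : c ≤ u1 := by linarith
    have hBS : B.Apart S := oriented_apart (.inl le_rfl)
    have hBw : B.Within (oriented o u0 u1 v0 v1) := oriented_within le_rfl hcu le_rfl le_rfl
    have hSw : S.Within (oriented o u0 u1 v0 v1) :=
      oriented_within (by linarith) le_rfl le_rfl le_rfl
    have hvv : v0 ≤ v1 := by linarith
    have hadm' : Admissible (B :: S :: L) := by
      refine hadm.refine (W := [B, S]) (fun R hR => ?_) (by simpa using hBS)
      rcases List.mem_pair.1 hR with rfl | rfl
      · exact ⟨valid_oriented_iff.2 ⟨by linarith, hvv⟩, hBw⟩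
      · exact ⟨valid_oriented_iff.2 ⟨hcu, hvv⟩, hSw⟩
    have hadm'' : Admissible (S :: (W ++ L)) :=
      (hadm'.refine hW hWp).perm List.perm_middle
    have hsplit : (u1 - u0) * (v1 - v0) = (c - u0) * (v1 - v0) + (u1 - c) * (v1 - v0) := by ring
    have hrest0 : 0 ≤ (u1 - c) * (v1 - v0) :=
      mul_nonneg (by linarith) (by linarith)
    have hlow' : 81 / 100 * s n₀ ≤ s (n + N) :=
      h.lower_bound_of_area_le hn₀ hnn hlow hNM (by linarith)
    have hanti := mul_le_mul_of_nonneg_left (h.anti n (n + N) hn (by omega)) hM0.le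
    have hIH : Packs s (n + N) nmax (S :: (W ++ L)) := by
      apply hstrip (n + N) (by omega) n₀ o c u1 v0 v1 (W ++ L) hn₀ (by omega) hadm'' hv _ hlow'
      · linarith
      · rw [List.map_append, List.sum_append]
        linarith
      · rw [List.map_append, List.sum_append]
        linarith
      · linarith
    have hfin := hpack nmax (S :: L) (List.pairwise_cons.1 hadm'.2).1
      (hIH.mono fun R hR => ⟨R, List.perm_middle.mem_iff.2 hR, subset_rfl⟩)
    refine hfin.mono fun R hR => ?_
    rcases List.mem_cons.1 hR with rfl | hR
    · exact ⟨_, List.mem_cons_self, hBw.subset⟩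
    rcases List.mem_cons.1 hR with rfl | hR
    · exact ⟨_, List.mem_cons_self, hSw.subset⟩
    · exact ⟨R, List.mem_cons_of_mem _ hR, subset_rfl⟩

lemma exists_wide (h : SlowSequence δ M N₀ s T P) {n : ℕ} (hn : N₀ ≤ n) {L : List Box}
    (hL : ∀ R ∈ L, R.Valid) (harea : (L.map area).sum = T n)
    (hperim : (L.map (perimPow δ)).sum ≤ P n) :
    ∃ R ∈ L, M * s n ≤ min (R.x1 - R.x0) (R.y1 - R.y0) := by
  by_contra! hcon
  have h1 : (L.map area).sum ≤ (L.map fun R => R.perimPow δ * (M * s n) ^ (1 - δ)).sum :=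
    List.sum_le_sum fun R hR =>
      area_le_perimPow_mul h.δ_nonneg h.δ_le_one (hL R hR) (hcon R hR).le
  rw [List.sum_map_mul_right] at h1
  have h2 : 0 ≤ (M * s n) ^ (1 - δ) :=
    Real.rpow_nonneg (mul_nonneg (Nat.cast_nonneg _) (h.pos n hn).le) _
  linarith [mul_le_mul_of_nonneg_right hperim h2, h.wide n hn]

lemma packsAll_of_packsStrip (h : SlowSequence δ M N₀ s T P) {nmax n : ℕ} (hn : N₀ ≤ n)
    (hstrip : PacksStrip δ M N₀ s T P nmax n) : PacksAll δ s T P nmax n := by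
  intro L hadm harea hperim
  have hs := h.pos n hn
  have hM0 : (0 : ℝ) < M := by exact_mod_cast h.M_pos
  have hMs : 0 < M * s n := mul_pos hM0 hs
  obtain ⟨R, hR, hRw⟩ := h.exists_wide hn (fun R hR => (hadm.1 R hR).1) harea hperim
  obtain ⟨L₁, L₂, rfl⟩ := List.append_of_mem hR
  have hperm : (L₁ ++ R :: L₂).Perm (R :: (L₁ ++ L₂)) := List.perm_middle
  have hadm₁ := hadm.perm hperm
  have harea₁ : R.area + ((L₁ ++ L₂).map area).sum = T n := by
    rw [← harea, (hperm.map area).sum_eq, List.map_cons, List.sum_cons]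
  have hperim₁ : R.perimPow δ + ((L₁ ++ L₂).map (perimPow δ)).sum ≤ P n := by
    rwa [(hperm.map (perimPow δ)).sum_eq, List.map_cons, List.sum_cons] at hperim
  obtain ⟨hRv, hR1, hR2⟩ := hadm₁.1 R List.mem_cons_self
  have hRu1 : min (R.x1 - R.x0) (R.y1 - R.y0) ≤ 1 := min_le_of_left_le hR1
  obtain ⟨o, u0, u1, v0, v1, hRo, huv, hu⟩ := R.exists_oriented
  rw [← hu] at hRw hRu1
  set c := v0 + M * s n with hc
  set S := oriented o u0 u1 v0 c with hS
  set R' := oriented o u0 u1 c v1 with hR'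
  have hSw : S.Within R := by
    rw [hRo]; exact oriented_within le_rfl le_rfl le_rfl (by linarith)
  have hR'w : R'.Within R := by
    rw [hRo]; exact oriented_within le_rfl le_rfl (by linarith) le_rfl
  have hR'v : R'.Valid := valid_oriented_iff.2 ⟨by linarith, by linarith⟩
  have hadm₂ : Admissible (S :: R' :: (L₁ ++ L₂)) := by
    refine hadm₁.refine (W := [S, R']) (fun Q hQ => ?_)
      (by simpa using (oriented_apart (.inr le_rfl) : S.Apart R'))
    rcases List.mem_pair.1 hQ with rfl | rfl
    · exact ⟨valid_oriented_iff.2 ⟨by linarith, by linarith⟩, hSw⟩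
    · exact ⟨hR'v, hR'w⟩
  have hRa : R.area = (u1 - u0) * (v1 - v0) := by rw [hRo, area_oriented]
  have hR'a : R'.area = (u1 - u0) * (v1 - c) := area_oriented
  have hcut : c - v0 = M * s n := by rw [hc]; ring
  have hR'p : R'.perimPow δ ≤ R.perimPow δ :=
    perimPow_le h.δ_nonneg hR'v (by linarith [hR'w.1, hR'w.2.1])
      (by linarith [hR'w.2.2.1, hR'w.2.2.2])
  have hP := hstrip n o u0 u1 v0 c (R' :: (L₁ ++ L₂)) hn le_rfl hadm₂ hcut hRw
    (by linarith) (by rw [hcut]; nlinarith)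
    (by rw [List.map_cons, List.sum_cons, hR'a]; linarith)
    (by rw [List.map_cons, List.sum_cons]; linarith)
  refine hP.mono fun Q hQ => ?_
  rcases List.mem_cons.1 hQ with rfl | hQ
  · exact ⟨R, hR, hSw.subset⟩
  rcases List.mem_cons.1 hQ with rfl | hQ
  · exact ⟨R, hR, hR'w.subset⟩
  · exact ⟨Q, hperm.mem_iff.2 (List.mem_cons_of_mem _ hQ), subset_rfl⟩

theorem packsAll_and_packsStrip (h : SlowSequence δ M N₀ s T P) (nmax n : ℕ) (hn : N₀ ≤ n) :
    PacksAll δ s T P nmax n ∧ PacksStrip δ M N₀ s T P nmax n := by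
  by_cases hlt : n < nmax
  · have IH : ∀ n', n < n' → PacksAll δ s T P nmax n' ∧ PacksStrip δ M N₀ s T P nmax n' :=
      fun n' hn' => packsAll_and_packsStrip h nmax n' (hn.trans hn'.le)
    have hstrip := h.packsStrip_of_lt hn (fun n' hn' => (IH n' hn').1) fun n' hn' => (IH n' hn').2
    exact ⟨h.packsAll_of_packsStrip hn hstrip, hstrip⟩
  · have hvac : ∀ L, Packs s n nmax L := fun L =>
      ⟨fun _ => 0, fun k hk hk' => by omega, fun k k' hk hk' => by omega⟩
    exact ⟨fun L _ _ _ => hvac L, fun _ _ _ _ _ _ L _ _ _ _ _ _ _ _ _ => hvac _⟩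
termination_by nmax - n

end SlowSequence

lemma tsum_subtype_le_eq_add {g : ℕ → ℝ} {N n : ℕ} (hn : N ≤ n)
    (hg : Summable fun k : {k : ℕ // N ≤ k} => g k) :
    ∑' k : {k : ℕ // n ≤ k}, g k = g n + ∑' k : {k : ℕ // n + 1 ≤ k}, g k := by
  have hsum : Summable ({k : ℕ | n + 1 ≤ k}.indicator g) := by
    refine (summable_subtype_iff_indicator.1 hg : Summable ({k : ℕ | N ≤ k}.indicator g)).indicator
      {k : ℕ | n + 1 ≤ k} |>.congr fun k => ?_
    rw [Set.indicator_indicator]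
    congr 1
    ext k
    simp only [Set.mem_inter_iff, Set.mem_ofPred_eq]
    omega
  have h1 := tsum_subtype {k : ℕ | n ≤ k} g
  have h2 := tsum_subtype {k : ℕ | n + 1 ≤ k} g
  have h3 : {k : ℕ | n ≤ k}.indicator g =
      fun k => ({n} : Set ℕ).indicator g k + {k : ℕ | n + 1 ≤ k}.indicator g k := by
    rw [← Set.indicator_union_of_disjoint (Set.disjoint_singleton_left.2 (by simp))]
    congr 1
    ext k
    simp only [Set.mem_union, Set.mem_singleton_iff, Set.mem_ofPred_eq]
    omega
  rw [h3, (summable_of_hasFiniteSupport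
    ((Set.finite_singleton n).subset Set.support_indicator_subset)).tsum_add hsum,
    ← tsum_subtype ({n} : Set ℕ), tsum_singleton] at h1
  exact h1.trans (congrArg _ h2.symm)

lemma le_add_of_derivWithin_le {f : ℝ → ℝ} (hf : ContDiffOn ℝ (⊤ : ℕ∞) f (Set.Ici 1))
    {u v C : ℝ} (hu : 1 ≤ u) (huv : u ≤ v)
    (hC : ∀ x ∈ Set.Icc u v, derivWithin f (Set.Ici 1) x ≤ C) : f v ≤ f u + C * (v - u) := by
  have hdiff : DifferentiableOn ℝ f (Set.Ici 1) := hf.differentiableOn (by simp)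
  have hnhds : ∀ x ∈ interior (Set.Icc u v), Set.Ici (1 : ℝ) ∈ nhds x := by
    intro x hx
    rw [interior_Icc] at hx
    exact Ici_mem_nhds (hu.trans_lt hx.1)
  have := (convex_Icc u v).image_sub_le_mul_sub_of_deriv_le
    (hf.continuousOn.mono fun x hx => hu.trans hx.1)
    (fun x hx => (hdiff.differentiableAt (hnhds x hx)).differentiableWithinAt)
    (C := C) (fun x hx => by
      rw [← derivWithin_of_mem_nhds (hnhds x hx)]
      exact hC x (interior_subset hx))
    u (Set.left_mem_Icc.2 huv) v (Set.right_mem_Icc.2 huv) huv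
  linarith

lemma mul_one_sub_le_rpow_neg {t u A B : ℝ} (ht0 : 0 ≤ t) (ht1 : t ≤ 1) (hu : 0 ≤ u)
    (hA : 0 < A) (hB : 0 < B) (hBA : B ≤ A * (1 + u)) :
    A ^ (-t) - A ^ (-t) * u ≤ B ^ (-t) := by
  have h1 : (A * (1 + u)) ^ (-t) ≤ B ^ (-t) :=
    Real.rpow_le_rpow_of_nonpos hB hBA (by linarith)
  rw [Real.mul_rpow hA.le (by linarith)] at h1
  have h2 : (1 + u) ^ (-1 : ℝ) ≤ (1 + u) ^ (-t) :=
    Real.rpow_le_rpow_of_exponent_le (by linarith) (by linarith)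
  rw [Real.rpow_neg_one] at h2
  have h3 : 1 - u ≤ (1 + u)⁻¹ := by
    rw [← one_div, le_div_iff₀ (by linarith)]
    nlinarith [sq_nonneg u]
  have h4 : 0 < A ^ (-t) := Real.rpow_pos_of_pos hA _
  nlinarith [mul_le_mul_of_nonneg_left (h3.trans h2) h4.le]

lemma strip_lower_bound {t K A B : ℝ} (ht0 : 0 ≤ t) (ht1 : t ≤ 1) (hA : 0 < A) (hB : 0 < B)
    (hK : (2 / 3 : ℝ) ^ ((1 : ℝ) / 2) ≤ K) (hAB : K * B ≤ A) :
    81 / 100 * A ^ (-t) ≤ B ^ (-t) := by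
  have hK81 : (81 / 100 : ℝ) ≤ K := by
    refine le_trans ?_ hK
    rw [← Real.sqrt_eq_rpow]
    exact Real.le_sqrt_of_sq_le (by norm_num)
  have h1 : (81 / 100 : ℝ) ≤ (81 / 100 : ℝ) ^ t := by
    simpa using Real.rpow_le_rpow_of_exponent_ge (x := 81 / 100) (by norm_num) (by norm_num) ht1
  have h2 : A ^ (-t) ≤ (81 / 100 * B) ^ (-t) :=
    Real.rpow_le_rpow_of_nonpos (by positivity) (by nlinarith) (by linarith)
  rw [Real.mul_rpow (by norm_num) hB.le, Real.rpow_neg (by norm_num : (0 : ℝ) ≤ 81 / 100)] at h2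
  have h3 : 0 < (81 / 100 : ℝ) ^ t := by positivity
  have h4 : 0 < A ^ (-t) := by positivity
  calc 81 / 100 * A ^ (-t) ≤ (81 / 100) ^ t * A ^ (-t) := mul_le_mul_of_nonneg_right h1 h4.le
    _ ≤ (81 / 100) ^ t * (((81 / 100) ^ t)⁻¹ * B ^ (-t)) := mul_le_mul_of_nonneg_left h2 h3.le
    _ = B ^ (-t) := by field_simp

lemma fifty_le_rpow {t K M : ℝ} (ht0 : 0 < t) (ht1 : t < 1) (hK0 : 0 < K) (hK1 : K ≤ 1)
    (hM : (50 / K ^ (t * (2 - t))) ^ (2 / (1 - t)) ≤ M) : 50 ≤ M ^ ((1 - t) / 2) := by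
  have hKt : K ^ (t * (2 - t)) ≤ 1 := Real.rpow_le_one hK0.le hK1 (by nlinarith)
  have hKt0 : 0 < K ^ (t * (2 - t)) := Real.rpow_pos_of_pos hK0 _
  have h1 : (50 : ℝ) ≤ 50 / K ^ (t * (2 - t)) := by
    rw [le_div_iff₀ hKt0]
    linarith
  refine h1.trans ?_
  have h0 : 0 ≤ 50 / K ^ (t * (2 - t)) := by positivity
  have h2 := Real.rpow_le_rpow (Real.rpow_nonneg h0 _) hM
    (show 0 ≤ (1 - t) / 2 by linarith)
  rwa [← Real.rpow_mul h0, show 2 / (1 - t) * ((1 - t) / 2) = 1 by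
    have : 1 - t ≠ 0 := by linarith
    field_simp, Real.rpow_one] at h2

lemma lt_rpow_of_le {t C M : ℝ} (ht0 : 0 < t) (ht1 : t < 1) (hC : 0 < C)
    (h50 : 50 ≤ M ^ ((1 - t) / 2))
    (hM : (4 : ℝ) ^ ((1 : ℝ) / (1 - t)) * C ^ (2 / (t * (1 - t))) ≤ M) :
    C < M ^ ((1 - t) / 2) := by
  rcases le_or_gt C 1 with hC1 | hC1
  · linarith
  have h1t : 1 - t ≠ 0 := by linarith
  have h4 : (0 : ℝ) ≤ 4 ^ ((1 : ℝ) / (1 - t)) := by positivity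
  have hCp : 0 ≤ C ^ (2 / (t * (1 - t))) := by positivity
  have h2 := Real.rpow_le_rpow (mul_nonneg h4 hCp) hM (show 0 ≤ (1 - t) / 2 by linarith)
  rw [Real.mul_rpow h4 hCp, ← Real.rpow_mul (by norm_num), ← Real.rpow_mul hC.le,
    show 1 / (1 - t) * ((1 - t) / 2) = 1 / 2 by field_simp,
    show 2 / (t * (1 - t)) * ((1 - t) / 2) = 1 / t by field_simp, ← Real.sqrt_eq_rpow,
    show (4 : ℝ) = 2 ^ 2 by norm_num, Real.sqrt_sq (by norm_num)] at h2
  have h3 : C ≤ C ^ (1 / t) := by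
    simpa using Real.rpow_le_rpow_of_exponent_le hC1.le ((one_le_div ht0).2 ht1.le)
  linarith

lemma rpow_neg_one_add_half {t M : ℝ} (hM : 0 < M) :
    M ^ (-1 + (1 - t) / 2) = M ^ ((1 - t) / 2) / M := by
  rw [Real.rpow_add hM, Real.rpow_neg_one]
  ring

lemma sub_div_le_of_derivWithin_le {f : ℝ → ℝ} {t M : ℝ} {n k : ℕ} (ht0 : 0 ≤ t) (ht1 : t ≤ 1)
    (hM : 1 ≤ M) (hf : ContDiffOn ℝ (⊤ : ℕ∞) f (Set.Ici 1)) (hf_pos : ∀ x : ℝ, 1 ≤ x → 0 < f x)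
    (hn : (1 : ℝ) ≤ n) (hk : (k : ℝ) ≤ 4 * M ^ 2)
    (hderiv : ∀ x ∈ Set.Icc (n : ℝ) ((n : ℝ) + 9 * M ^ 2),
      derivWithin f (Set.Ici 1) x ≤ (1 / 4752) * (M ^ 4)⁻¹ * f n) :
    f n ^ (-t) - f n ^ (-t) / (528 * M ^ 2) ≤ f ((n + k : ℕ) : ℝ) ^ (-t) := by
  have hfn := hf_pos n hn
  have hk0 : (0 : ℝ) ≤ k := k.cast_nonneg
  have hM2 : 0 < M ^ 2 := by positivity
  rw [Nat.cast_add]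
  have h1 := le_add_of_derivWithin_le hf hn (le_add_of_nonneg_right hk0)
    fun x hx => hderiv x ⟨hx.1, hx.2.trans (by linarith)⟩
  rw [add_sub_cancel_left] at h1
  have h2 : f (n + k) ≤ f n * (1 + 1 / (528 * M ^ 2)) := by
    have h3 : 1 / 4752 * (M ^ 4)⁻¹ * f n * k ≤ 1 / 4752 * (M ^ 4)⁻¹ * f n * (9 * M ^ 2) := by
      apply mul_le_mul_of_nonneg_left _ (by positivity)
      linarith
    have h4 : 1 / 4752 * (M ^ 4)⁻¹ * f n * (9 * M ^ 2) = f n * (1 / (528 * M ^ 2)) := by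
      field_simp
      norm_num
    linarith
  have h5 := mul_one_sub_le_rpow_neg ht0 ht1 (u := 1 / (528 * M ^ 2))
    (by positivity) hfn (hf_pos _ (by linarith)) h2
  rwa [mul_one_div] at h5

lemma mul_rpow_lt_of_bounds {t M A S T ν lam c d clv : ℝ} (hM : 0 < M) (hA : 0 < A)
    (hν : 0 < ν) (hd : 0 < d) (hclv : 0 < clv)
    (hS : S ≤ c * ν / A ^ (t + (1 - t) * t)) (hT : d * lam / A ^ (2 * t) ≤ T)
    (hlam : clv * ν ≤ lam) (hC : c / (clv * d) < M ^ ((1 - t) / 2)) :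
    M ^ (-1 + (1 - t) / 2) * S * (M * A ^ (-t)) ^ (1 - (1 - t)) < T := by
  rw [rpow_neg_one_add_half hM]
  have h1 : (M * A ^ (-t)) ^ (1 - (1 - t)) = M ^ t * A ^ (-(t * t)) := by
    rw [Real.mul_rpow hM.le (Real.rpow_nonneg hA.le _), ← Real.rpow_mul hA.le]
    ring_nf
  have h2 : M ^ ((1 - t) / 2) * M ^ ((1 - t) / 2) * M ^ t = M := by
    rw [← Real.rpow_add hM, ← Real.rpow_add hM]
    ring_nf
    exact Real.rpow_one _
  have hAA : 1 / A ^ (t + (1 - t) * t) * A ^ (-(t * t)) = 1 / A ^ (2 * t) := by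
    rw [one_div, one_div, ← Real.rpow_neg hA.le, ← Real.rpow_neg hA.le, ← Real.rpow_add hA]
    ring_nf
  have hx : 0 < M ^ ((1 - t) / 2) := by positivity
  generalize M ^ ((1 - t) / 2) = x at *
  have hMt : x / M * M ^ t = 1 / x := by
    field_simp
    linarith
  have hA2 : 0 < 1 / A ^ (2 * t) := by positivity
  have hC' : c < x * (clv * d) := (div_lt_iff₀ (by positivity)).1 hC
  calc x / M * S * (M * A ^ (-t)) ^ (1 - (1 - t))
      ≤ x / M * (c * ν / A ^ (t + (1 - t) * t)) * (M ^ t * A ^ (-(t * t))) := by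
        rw [h1]
        gcongr
    _ = (x / M * M ^ t) * (c * ν) * (1 / A ^ (t + (1 - t) * t) * A ^ (-(t * t))) := by ring
    _ = (c / x) * ν * (1 / A ^ (2 * t)) := by rw [hMt, hAA]; ring
    _ < (clv * d) * ν * (1 / A ^ (2 * t)) := by
        gcongr
        rw [div_lt_iff₀ hx]
        linarith
    _ ≤ d * lam * (1 / A ^ (2 * t)) := by
        apply mul_le_mul_of_nonneg_right _ hA2.le
        nlinarith
    _ ≤ T := by rw [mul_one_div]; exact hT

theorem slowSequence_rpow_neg {t l K : ℝ} {M N₀ N₁ : ℕ} {f : ℝ → ℝ} (ht0 : 0 < t) (ht1 : t < 1)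
    (hK : 0 < K) (hK' : (2 / 3 : ℝ) ^ ((1 : ℝ) / 2) ≤ K) (hM : 0 < M)
    (hN₀ : 0 < N₀) (hN₁N₀ : N₁ ≤ N₀)
    (hf_smooth : ContDiffOn ℝ (⊤ : ℕ∞) f (Set.Ici 1))
    (hf_incr : StrictMonoOn f (Set.Ici 1))
    (hf_pos : ∀ x : ℝ, 1 ≤ x → 0 < f x)
    (hf_sum : Summable fun n : {n : ℕ // N₁ ≤ n} => f ((n : ℕ) : ℝ) ^ (-(2 * t)))
    (hgrowth : ∀ n : ℕ, N₀ ≤ n → K * f ((1 + l) * (n : ℝ)) ≤ f (n : ℝ))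
    (h50 : 50 ≤ (M : ℝ) ^ ((1 - t) / 2))
    (hderiv : ∀ n : ℕ, N₀ ≤ n → ∀ x ∈ Set.Icc (n : ℝ) ((n : ℝ) + 9 * (M : ℝ) ^ 2),
      derivWithin f (Set.Ici 1) x ≤ (1 / 4752) * ((M : ℝ) ^ 4)⁻¹ * f (n : ℝ))
    (hwindow : ∀ n : ℕ, N₀ ≤ n → 9 * (M : ℝ) * f (n : ℝ) ^ t ≤ l * (n : ℝ))
    (hwide : ∀ n : ℕ, N₀ ≤ n →
      (M : ℝ) ^ (-1 + (1 - t) / 2) *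
        (∑ k ∈ Finset.Icc 1 (n - 1), f (k : ℝ) ^ (-(t + (1 - t) * t))) *
        (M * f n ^ (-t)) ^ (1 - (1 - t)) < ∑' k : {k : ℕ // n ≤ k}, f ((k : ℕ) : ℝ) ^ (-(2 * t))) :
    SlowSequence (1 - t) M N₀ (fun n => f n ^ (-t))
      (fun n => ∑' k : {k : ℕ // n ≤ k}, f ((k : ℕ) : ℝ) ^ (-(2 * t)))
      (fun n => (M : ℝ) ^ (-1 + (1 - t) / 2) *
        ∑ k ∈ Finset.Icc 1 (n - 1), f (k : ℝ) ^ (-(t + (1 - t) * t))) where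
  δ_nonneg := by linarith
  δ_le_one := by linarith
  M_pos := hM
  pos n hn := Real.rpow_pos_of_pos (hf_pos _ (Nat.one_le_cast.2 (hN₀.trans_le hn))) _
  anti n n' hn hnn :=
    Real.rpow_le_rpow_of_nonpos (hf_pos _ (Nat.one_le_cast.2 (hN₀.trans_le hn)))
      (hf_incr.monotoneOn (Set.mem_Ici.2 (Nat.one_le_cast.2 (hN₀.trans_le hn)))
        (Set.mem_Ici.2 (Nat.one_le_cast.2 (hN₀.trans_le (hn.trans hnn)))) (Nat.cast_le.2 hnn))
      (by linarith)
  slow n hn k hk :=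
    sub_div_le_of_derivWithin_le ht0.le ht1.le (Nat.one_le_cast.2 hM) hf_smooth hf_pos
      (Nat.one_le_cast.2 (hN₀.trans_le hn)) (by exact_mod_cast hk) (hderiv n hn)
  tail n hn := by
    have hfn := hf_pos n (Nat.one_le_cast.2 (hN₀.trans_le hn))
    have h1 : (f n ^ (-t)) ^ 2 = f n ^ (-(2 * t)) := by
      rw [← Real.rpow_natCast, ← Real.rpow_mul hfn.le]
      push_cast
      ring_nf
    rw [h1]
    exact tsum_subtype_le_eq_add (g := fun k : ℕ => f k ^ (-(2 * t))) (hN₁N₀.trans hn) hf_sum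
  budget n hn := by
    obtain ⟨j, rfl⟩ : ∃ j, n = j + 1 := ⟨n - 1, by omega⟩
    have hfn := hf_pos _ (Nat.one_le_cast.2 (hN₀.trans_le hn))
    have h1 : (f ((j + 1 : ℕ) : ℝ) ^ (-t)) ^ (1 - t) * f ((j + 1 : ℕ) : ℝ) ^ (-t) =
        f ((j + 1 : ℕ) : ℝ) ^ (-(t + (1 - t) * t)) := by
      rw [← Real.rpow_mul hfn.le, ← Real.rpow_add hfn]
      ring_nf
    rw [h1, rpow_neg_one_add_half (Nat.cast_pos.2 hM), Nat.add_sub_cancel, Nat.add_sub_cancel,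
      Finset.sum_Icc_succ_top (by omega), mul_add]
    gcongr
  wide := hwide
  strip n n' hn hnn hle := by
    have h1 : (1 : ℝ) ≤ n := Nat.one_le_cast.2 (hN₀.trans_le hn)
    have h1' : (1 : ℝ) ≤ n' := Nat.one_le_cast.2 (hN₀.trans_le (hn.trans hnn))
    have hfn := hf_pos _ h1
    have h2 : (n' : ℝ) - n ≤ l * n := by
      have h3 : (n' : ℝ) - n ≤ 2 * M * f n ^ t := by
        rwa [Real.rpow_neg hfn.le, ← div_eq_mul_inv, div_le_iff₀ (by positivity)] at hle
      have h4 := hwindow n hn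
      have h5 : 0 < M * f n ^ t := by positivity
      linarith
    have h6 : f n' ≤ f ((1 + l) * n) :=
      hf_incr.monotoneOn h1' (show (1 : ℝ) ≤ (1 + l) * n by nlinarith) (by linarith)
    exact strip_lower_bound ht0.le ht1.le hfn (hf_pos _ h1') hK'
      ((mul_le_mul_of_nonneg_left h6 hK.le).trans (hgrowth n hn))

lemma admissible_rectangles {m : ℕ} {p : Fin m → ℝ × ℝ} {a b : Fin m → ℝ}
    (hab : ∀ i, 0 ≤ a i ∧ 0 ≤ b i)
    (hdisj : Pairwise fun i j : Fin m =>
      Disjoint (interior (rectangle (p i) (a i) (b i)))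
        (interior (rectangle (p j) (a j) (b j))))
    (hheight : ∀ i, max (a i) (b i) ≤ 1) :
    Admissible ((Finset.univ : Finset (Fin m)).toList.map fun i =>
      (⟨(p i).1, (p i).1 + a i, (p i).2, (p i).2 + b i⟩ : Box)) := by
  refine ⟨fun R hR => ?_, ?_⟩
  · obtain ⟨i, -, rfl⟩ := List.mem_map.1 hR
    have h1 := hab i
    have h2 := max_le_iff.1 (hheight i)
    simp only [Valid, add_sub_cancel_left]
    exact ⟨⟨by linarith, by linarith⟩, h2⟩
  · rw [List.pairwise_map]
    exact (Finset.nodup_toList _).imp fun hij => hdisj hij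

theorem packing_into_a_family_of_rectangles
    (t δ : ℝ) (ht₁ : 1 / 2 < t) (ht₂ : t < 1) (hδ : δ = 1 - t)
    (c₁ c₂ d₁ d₂ clv l K : ℝ)
    (hc₁ : 0 < c₁) (hc₂ : 0 < c₂) (hd₁ : 0 < d₁) (hd₂ : 0 < d₂)
    (hclv : 0 < clv) (hl : 0 < l) (hK : 0 < K) (hK' : K ≥ (2 / 3 : ℝ) ^ ((1 : ℝ) / 2))
    (ν₁ ν₂ lam₁ lam₂ : ℕ → ℝ)
    (hν₁ : ∀ n, 0 < ν₁ n) (hν₂ : ∀ n, 0 < ν₂ n)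
    (hlam₁ : ∀ n, 0 < lam₁ n) (hlam₂ : ∀ n, 0 < lam₂ n)
    (ξ₁ ξ₂ η₁ η₂ : ℝ) (hξ₁ : 0 < ξ₁) (hξ₂ : 0 < ξ₂) (hη₁ : 0 < η₁) (hη₂ : 0 < η₂)
    (M N₀ N₁ : ℕ) (hM : 0 < M) (hN₁ : 0 < N₁) (hN₁N₀ : N₁ < N₀)
    (f : ℝ → ℝ)
    (hf_smooth : ContDiffOn ℝ (⊤ : ℕ∞) f (Set.Ici 1))
    (hf_incr : StrictMonoOn f (Set.Ici 1))
    (hf_pos : ∀ x : ℝ, 1 ≤ x → 0 < f x)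
    (hf_sum : Summable fun n : {n : ℕ // N₁ ≤ n} => f ((n : ℕ) : ℝ) ^ (-(2 * t)))
    (cond1 : ∀ n₀ : ℕ, N₀ ≤ n₀ → f (n₀ : ℝ) ≥ K * f ((1 + l) * (n₀ : ℝ)))
    (cond2 : ∀ n₁ : ℕ, N₁ ≤ n₁ →
      c₁ * ξ₁ * ν₁ n₁ / f (n₁ : ℝ) ^ (t + δ * t) ≤
          ∑ n ∈ Finset.Icc 1 (n₁ - 1), f (n : ℝ) ^ (-(t + δ * t)) ∧
        ∑ n ∈ Finset.Icc 1 (n₁ - 1), f (n : ℝ) ^ (-(t + δ * t)) ≤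
          c₂ * ξ₂ * ν₂ n₁ / f (n₁ : ℝ) ^ (t + δ * t))
    (cond3 : ∀ n₁ : ℕ, N₁ ≤ n₁ →
      d₁ * η₁ * lam₁ n₁ / f (n₁ : ℝ) ^ (2 * t) ≤
          (∑' n : {n : ℕ // n₁ ≤ n}, f ((n : ℕ) : ℝ) ^ (-(2 * t))) ∧
        (∑' n : {n : ℕ // n₁ ≤ n}, f ((n : ℕ) : ℝ) ^ (-(2 * t))) ≤
          d₂ * η₂ * lam₂ n₁ / f (n₁ : ℝ) ^ (2 * t))
    (cond4 : ∀ n₀ : ℕ, N₀ ≤ n₀ → lam₁ n₀ ≥ clv * ν₂ n₀)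
    (cond6 : (M : ℝ) ≥
      max ((4 : ℝ) ^ ((1 : ℝ) / (1 - t)) * (c₂ * ξ₂ / (clv * d₁ * η₁)) ^ (2 / (t * (1 - t))))
        ((50 / K ^ (t * (2 - t))) ^ (2 / (1 - t))))
    (cond7 : ∀ n₀ : ℕ, N₀ ≤ n₀ → ∀ x ∈ Set.Icc (n₀ : ℝ) ((n₀ : ℝ) + 9 * (M : ℝ) ^ 2),
      derivWithin f (Set.Ici 1) x ≤ (1 / 4752) * ((M : ℝ) ^ 4)⁻¹ * f (n₀ : ℝ))
    (cond8 : ∀ n₀ : ℕ, N₀ ≤ n₀ →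
      f ((n₀ : ℝ) + 9 * (M : ℝ) ^ 2) ≤ (264 * (M : ℝ) ^ 2) ^ ((1 : ℝ) / t) * f (n₀ : ℝ))
    (cond9 : ∀ n₀ : ℕ, N₀ ≤ n₀ → 9 * (M : ℝ) * f (n₀ : ℝ) ^ t ≤ l * (n₀ : ℝ))
    -- the fixed integers `n_max ≥ n₀ ≥ N₀`
    (n₀ nmax : ℕ) (hn₀ : N₀ ≤ n₀) (hnmax : n₀ ≤ nmax)
    -- the finite family ℛ of rectangles with pairwise disjoint interiors
    (m : ℕ) (p : Fin m → ℝ × ℝ) (a b : Fin m → ℝ)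
    (hab : ∀ i, 0 ≤ a i ∧ 0 ≤ b i)
    (hdisjℛ : Pairwise fun i j : Fin m =>
      Disjoint (interior (rectangle (p i) (a i) (b i)))
        (interior (rectangle (p j) (a j) (b j))))
    -- area(ℛ) = ∑_{n=n₀}^∞ f(n)^{-2t}
    (harea : ∑ i, a i * b i = ∑' n : {n : ℕ // n₀ ≤ n}, f ((n : ℕ) : ℝ) ^ (-(2 * t)))
    -- perim_δ(ℛ) ≤ M^{-1+δ/2} ∑_{n=1}^{n₀-1} f(n)^{-(t+δt)}
    (hperim : ∑ i, min (a i) (b i) ^ δ * max (a i) (b i) ≤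
      (M : ℝ) ^ (-1 + δ / 2) * ∑ n ∈ Finset.Icc 1 (n₀ - 1), f (n : ℝ) ^ (-(t + δ * t)))
    -- sup_{R ∈ ℛ} h(R) ≤ 1
    (hheight : ∀ i, max (a i) (b i) ≤ 1) :
    -- the squares of sidelength f(n)^{-t}, n₀ ≤ n < n_max, can be packed into ⋃_{R∈ℛ} R
    ∃ pos : {n : ℕ // n₀ ≤ n ∧ n < nmax} → ℝ × ℝ,
      (∀ n, square (pos n) (f ((n : ℕ) : ℝ) ^ (-t)) ⊆ ⋃ i, rectangle (p i) (a i) (b i)) ∧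
      Pairwise fun n n' : {n : ℕ // n₀ ≤ n ∧ n < nmax} =>
        Disjoint (interior (square (pos n) (f ((n : ℕ) : ℝ) ^ (-t))))
          (interior (square (pos n') (f ((n' : ℕ) : ℝ) ^ (-t)))) := by
  subst hδ
  have ht0 : 0 < t := by linarith
  have hK1 : K ≤ 1 := by
    have h1 : (1 : ℝ) ≤ n₀ := Nat.one_le_cast.2 (by omega)
    have h2 := hf_pos _ h1
    have h3 : f n₀ ≤ f ((1 + l) * n₀) :=
      hf_incr.monotoneOn h1 (show (1 : ℝ) ≤ (1 + l) * n₀ by nlinarith) (by nlinarith)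
    by_contra! hK2
    nlinarith [cond1 n₀ hn₀]
  have h50 : 50 ≤ (M : ℝ) ^ ((1 - t) / 2) :=
    fifty_le_rpow ht0 ht₂ hK hK1 ((le_max_right _ _).trans cond6)
  have hC : c₂ * ξ₂ / (clv * (d₁ * η₁)) < (M : ℝ) ^ ((1 - t) / 2) := by
    rw [← mul_assoc]
    exact lt_rpow_of_le ht0 ht₂ (by positivity) h50 ((le_max_left _ _).trans cond6)
  have hslow := slowSequence_rpow_neg ht0 ht₂ hK hK' hM (hN₁.trans hN₁N₀) hN₁N₀.le hf_smooth
    hf_incr hf_pos hf_sum cond1 h50 cond7 cond9 fun n hn =>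
      mul_rpow_lt_of_bounds (Nat.cast_pos.2 hM)
        (hf_pos n (Nat.one_le_cast.2 ((hN₁.trans hN₁N₀).trans_le hn))) (hν₂ n)
        (mul_pos hd₁ hη₁) hclv (cond2 n (hN₁N₀.le.trans hn)).2 (cond3 n (hN₁N₀.le.trans hn)).1
        (cond4 n hn) hC
  obtain ⟨pos, hpos₁, hpos₂⟩ := (hslow.packsAll_and_packsStrip nmax n₀ hn₀).1 _
    (admissible_rectangles hab hdisjℛ hheight)
    (by
      rw [List.map_map, Finset.sum_map_toList]
      simpa only [Function.comp_def, area, add_sub_cancel_left] using harea)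
    (by
      rw [List.map_map, Finset.sum_map_toList]
      simpa only [Function.comp_def, perimPow, add_sub_cancel_left] using hperim)
  refine ⟨fun n => pos n, fun n => ?_, fun n n' hne => ?_⟩
  · obtain ⟨R, hR, hsub⟩ := hpos₁ n n.2.1 n.2.2
    obtain ⟨i, -, rfl⟩ := List.mem_map.1 hR
    exact hsub.trans (Set.subset_iUnion (fun i => rectangle (p i) (a i) (b i)) i)
  · exact hpos₂ n n' n.2.1 n.2.2 n'.2.1 n'.2.2 fun h => hne (Subtype.ext h)
end

section
/- For any 1/2 < t < 1 and any real x ≥ e^{16/(1-t)²}, one has (7/20)·x^{1-t}/((1-t)(log x)^t) < ∑_{n ≤ x} p_n^{-t} < (10/3)·x^{1-t}/((1-t)(log x)^t), where the sum ranges over all positive integers n with n ≤ x. -/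
/-- The `n`-th prime number, 1-indexed: `nthPrime 1 = 2`, `nthPrime 2 = 3`, ... -/
noncomputable def nthPrime (n : ℕ) : ℕ := Nat.nth Nat.Prime (n - 1)

/-- The graph of `u ↦ u ^ (1 - t)` lies below its tangent line at `a`. -/
theorem add_rpow_one_sub_le {a s t : ℝ} (ha : 0 < a) (hs : -a ≤ s) (ht₀ : 0 < t) (ht₁ : t < 1) :
    (a + s) ^ (1 - t) ≤ a ^ (1 - t) + (1 - t) * s * a ^ (-t) := by
  have hsa : -1 ≤ s / a := by rw [le_div_iff₀ ha]; linarith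
  have hbern : (1 + s / a) ^ (1 - t) ≤ 1 + (1 - t) * (s / a) :=
    rpow_one_add_le_one_add_mul_self hsa (by linarith) (by linarith)
  have hpow : a ^ (1 - t) = a * a ^ (-t) := by
    rw [sub_eq_add_neg, Real.rpow_add ha, Real.rpow_one]
  calc (a + s) ^ (1 - t) = (a * (1 + s / a)) ^ (1 - t) := by
        congr 1; field_simp
    _ = a ^ (1 - t) * (1 + s / a) ^ (1 - t) :=
        Real.mul_rpow ha.le (by linarith)
    _ ≤ a ^ (1 - t) * (1 + (1 - t) * (s / a)) :=
        mul_le_mul_of_nonneg_left hbern (by positivity)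
    _ = a ^ (1 - t) + (1 - t) * s * a ^ (-t) := by
        rw [hpow]; field_simp

theorem sum_Icc_rpow_neg_le {t : ℝ} (ht₀ : 0 < t) (ht₁ : t < 1) (N : ℕ) :
    ∑ n ∈ Finset.Icc 1 N, (n : ℝ) ^ (-t) ≤ (N : ℝ) ^ (1 - t) / (1 - t) := by
  have h1t : 0 < 1 - t := by linarith
  induction N with
  | zero => simp [Real.zero_rpow h1t.ne']
  | succ k ih =>
    rw [Finset.sum_Icc_succ_top (by omega), le_div_iff₀ h1t]
    rw [le_div_iff₀ h1t] at ih
    have h := add_rpow_one_sub_le (a := ((k + 1 : ℕ) : ℝ)) (s := -1) (by positivity)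
      (by push_cast; linarith [Nat.cast_nonneg (α := ℝ) k]) ht₀ ht₁
    have hk : ((k + 1 : ℕ) : ℝ) + -1 = k := by push_cast; ring
    rw [hk] at h
    linarith

theorem le_sum_Icc_rpow_neg {t : ℝ} (ht₀ : 0 < t) (ht₁ : t < 1) (N : ℕ) :
    (((N : ℝ) + 1) ^ (1 - t) - 1) / (1 - t) ≤ ∑ n ∈ Finset.Icc 1 N, (n : ℝ) ^ (-t) := by
  have h1t : 0 < 1 - t := by linarith
  induction N with
  | zero => simp
  | succ k ih =>
    rw [Finset.sum_Icc_succ_top (by omega), div_le_iff₀ h1t]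
    rw [div_le_iff₀ h1t] at ih
    have h := add_rpow_one_sub_le (a := ((k + 1 : ℕ) : ℝ)) (s := 1) (by positivity)
      (by linarith [Nat.cast_nonneg (α := ℝ) (k + 1)]) ht₀ ht₁
    push_cast at h ⊢
    linarith

theorem le_nthPrime (n : ℕ) : n ≤ nthPrime n := by
  have := Nat.add_two_le_nth_prime (n - 1)
  unfold nthPrime
  omega

/-- The product of the first `n` primes is at least `n!`, and it is at most `4 ^ p_n`. -/
theorem factorial_le_four_pow_nthPrime (n : ℕ) : n.factorial ≤ 4 ^ nthPrime n := by
  refine le_trans ?_ (primorial_le_four_pow _)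
  rw [← Finset.prod_range_add_one_eq_factorial]
  calc ∏ i ∈ Finset.range n, (i + 1) ≤ ∏ i ∈ Finset.range n, Nat.nth Nat.Prime i :=
        Finset.prod_le_prod' fun i _ ↦ by linarith [Nat.add_two_le_nth_prime i]
    _ = ∏ p ∈ (Finset.range n).image (Nat.nth Nat.Prime), p :=
        (Finset.prod_image (f := fun p ↦ p)
          (Nat.nth_injective Nat.infinite_setOfPred_prime).injOn).symm
    _ ≤ primorial (nthPrime n) := by
        refine Finset.prod_le_prod_of_subset_of_one_le' ?_ ?_
        · intro p hp
          obtain ⟨i, hi, rfl⟩ := Finset.mem_image.1 hp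
          rw [Finset.mem_range] at hi
          refine Finset.mem_filter.2 ⟨Finset.mem_range.2 (Nat.lt_succ_of_le ?_),
            Nat.prime_nth_prime i⟩
          exact Nat.nth_monotone Nat.infinite_setOfPred_prime (by omega)
        · intro p hp _
          exact (Finset.mem_filter.1 hp).2.one_le

theorem mul_log_sub_le_nthPrime {n : ℕ} (hn : 1 ≤ n) :
    n * (Real.log n - 1) ≤ Real.log 4 * nthPrime n := by
  have hn₀ : (0 : ℝ) < n := by exact_mod_cast hn
  have hexp := Real.pow_div_factorial_le_exp (n : ℝ) hn₀.le n
  have hfac : ((n.factorial : ℕ) : ℝ) ≤ 4 ^ nthPrime n := by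
    exact_mod_cast factorial_le_four_pow_nthPrime n
  rw [div_le_iff₀ (by positivity)] at hexp
  have hle : (n : ℝ) ^ n ≤ Real.exp n * 4 ^ nthPrime n :=
    hexp.trans (by gcongr)
  have hlog := Real.log_le_log (by positivity) hle
  rw [Real.log_pow, Real.log_mul (by positivity) (by positivity), Real.log_exp,
    Real.log_pow] at hlog
  linarith

theorem log_le_div_ten {L : ℝ} (hL : 64 ≤ L) : Real.log L ≤ L / 10 := by
  have hlog : Real.log (L / 64) ≤ L / 64 - 1 := Real.log_le_sub_one_of_pos (by linarith)
  have h64 : Real.log 64 = 6 * Real.log 2 := by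
    rw [show (64 : ℝ) = 2 ^ 6 by norm_num, Real.log_pow]; norm_num
  rw [Real.log_div (by linarith) (by norm_num), h64] at hlog
  linarith [Real.log_two_lt_d9]

theorem nthPrime_le {n : ℕ} {L : ℝ} (hn : 1 ≤ n) (hL : 64 ≤ L) (hnL : Real.log n ≤ L) :
    (nthPrime n : ℝ) ≤ 14 / 5 * (n * L) := by
  have hn₁ : (1 : ℝ) ≤ n := by exact_mod_cast hn
  have hnL' : 64 ≤ n * L := by nlinarith
  set y : ℝ := 14 / 5 * (n * L) with hy
  have hy₁ : 1 < y := by linarith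
  have hlog_nL : Real.log (n * L) = Real.log n + Real.log L :=
    Real.log_mul (by positivity) (by linarith)
  have hlog3 : Real.log 3 ≤ 2 := by
    linarith [Real.log_le_sub_one_of_pos (show (0 : ℝ) < 3 by norm_num)]
  have hlog_y2 : Real.log (y + 2) ≤ 2 + Real.log n + Real.log L := by
    calc Real.log (y + 2) ≤ Real.log (3 * (n * L)) :=
          Real.log_le_log (by linarith) (by linarith)
      _ = Real.log 3 + Real.log (n * L) := Real.log_mul (by norm_num) (by linarith)
      _ ≤ _ := by rw [hlog_nL]; linarith
  have hlog_y : Real.log y ≤ 2 + Real.log n + Real.log L :=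
    (Real.log_le_log (by linarith) (by linarith)).trans hlog_y2
  have hlog_n : Real.log n ≤ n := by
    linarith [Real.log_le_sub_one_of_pos (show (0 : ℝ) < n by linarith)]
  have hlogL := log_le_div_ten hL
  have hmain : (n : ℝ) * Real.log y ≤ (y - 1) * Real.log 2 - Real.log (y + 2) := by
    have h₁ : (n : ℝ) * Real.log y ≤ n * (2 + L + L / 10) := by gcongr; linarith
    have h₂ : (y - 1) * (69 / 100) ≤ (y - 1) * Real.log 2 := by
      gcongr
      linarith [Real.log_two_gt_d9]
    have h₃ : L ≤ n * L := by nlinarith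
    have h₄ : 64 * (n : ℝ) ≤ n * L := by nlinarith
    linarith
  have hpi : (n : ℝ) ≤ Nat.primeCounting ⌊y⌋₊ := by
    refine le_trans ?_ (Chebyshev.pi_ge' hy₁)
    rwa [le_div_iff₀ (Real.log_pos hy₁)]
  have hcount : n - 1 < Nat.count Nat.Prime (⌊y⌋₊ + 1) := by
    have : n ≤ Nat.count Nat.Prime (⌊y⌋₊ + 1) := by exact_mod_cast hpi
    omega
  have hlt : nthPrime n ≤ ⌊y⌋₊ := Nat.lt_succ_iff.1 (Nat.nth_lt_of_lt_count hcount)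
  exact (Nat.cast_le.2 hlt).trans (Nat.floor_le (by linarith))

theorem mul_mul_rpow_neg_le {a b c t : ℝ} (ha : 1 ≤ a) (hb : 0 < b) (hc : 0 < c) (ht : t < 1) :
    (1 / a) * (c ^ (-t) * b ^ (-t)) ≤ (a * (b * c)) ^ (-t) := by
  rw [Real.mul_rpow (by linarith) (by positivity), Real.mul_rpow hb.le hc.le]
  have : 1 / a ≤ a ^ (-t) := by
    rw [one_div, ← Real.rpow_neg_one]
    exact Real.rpow_le_rpow_of_exponent_le ha (by linarith)
  calc (1 / a) * (c ^ (-t) * b ^ (-t)) ≤ a ^ (-t) * (c ^ (-t) * b ^ (-t)) := by gcongr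
    _ = _ := by ring

theorem nthPrime_rpow_neg_le {n : ℕ} {L t : ℝ} (hn : 1 ≤ n) (hL : 64 ≤ L)
    (hnL : L / 2 ≤ Real.log n) (ht₀ : 0 < t) (ht₁ : t < 1) :
    (nthPrime n : ℝ) ^ (-t) ≤ 3 * (L ^ (-t) * (n : ℝ) ^ (-t)) := by
  have hn₀ : (0 : ℝ) < n := by exact_mod_cast hn
  have hL₀ : 0 < L := by linarith
  have hlog4 : Real.log 4 = 2 * Real.log 2 := by
    rw [show (4 : ℝ) = 2 ^ 2 by norm_num, Real.log_pow]; norm_num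
  have hlow : 1 / 3 * (n * L) ≤ (nthPrime n : ℝ) := by
    have h₁ := mul_log_sub_le_nthPrime hn
    have h₂ : (n : ℝ) * (31 / 64 * L) ≤ n * (Real.log n - 1) := by gcongr; linarith
    have h₃ : Real.log 4 * nthPrime n ≤ 14 / 10 * nthPrime n := by
      gcongr; linarith [Real.log_two_lt_d9]
    nlinarith [mul_pos hn₀ hL₀]
  have h3 : (1 / 3 : ℝ) ^ (-t) ≤ 3 := by
    rw [one_div, Real.inv_rpow (by norm_num), Real.rpow_neg (by norm_num), inv_inv]
    exact (Real.rpow_le_rpow_of_exponent_le (by norm_num) ht₁.le).trans_eq (Real.rpow_one 3)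
  calc (nthPrime n : ℝ) ^ (-t) ≤ (1 / 3 * (n * L)) ^ (-t) :=
        Real.rpow_le_rpow_of_nonpos (by positivity) hlow (by linarith)
    _ = (1 / 3 : ℝ) ^ (-t) * (L ^ (-t) * (n : ℝ) ^ (-t)) := by
        rw [Real.mul_rpow (by norm_num) (by positivity), Real.mul_rpow hn₀.le hL₀.le]; ring
    _ ≤ _ := by gcongr

theorem sum_nthPrime_rpow_neg_le {t x : ℝ} (ht₀ : 0 < t) (ht₁ : t < 1) (hx : 1 ≤ x)
    (hL : 64 ≤ Real.log x) :
    ∑ n ∈ Finset.Icc 1 ⌊x⌋₊, (nthPrime n : ℝ) ^ (-t) ≤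
      3 * (Real.log x ^ (-t) * (x ^ (1 - t) / (1 - t))) + √x ^ (1 - t) / (1 - t) := by
  have h1t : 0 < 1 - t := by linarith
  have hfloor : ∀ y : ℝ, 0 ≤ y →
      ∑ n ∈ Finset.Icc 1 ⌊y⌋₊, (n : ℝ) ^ (-t) ≤ y ^ (1 - t) / (1 - t) := fun y hy ↦
    (sum_Icc_rpow_neg_le ht₀ ht₁ _).trans (by gcongr; exact Nat.floor_le hy)
  have hterm : ∀ n ∈ Finset.Icc 1 ⌊x⌋₊, (nthPrime n : ℝ) ^ (-t) ≤
      3 * (Real.log x ^ (-t) * (n : ℝ) ^ (-t)) + if n ≤ ⌊√x⌋₊ then (n : ℝ) ^ (-t) else 0 := by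
    intro n hn
    have hn₁ : 1 ≤ n := (Finset.mem_Icc.1 hn).1
    have hn₀ : (0 : ℝ) < n := by exact_mod_cast hn₁
    have hL₀ : 0 < Real.log x := by linarith
    split_ifs with h
    · have : (nthPrime n : ℝ) ^ (-t) ≤ (n : ℝ) ^ (-t) :=
        Real.rpow_le_rpow_of_nonpos hn₀ (by exact_mod_cast le_nthPrime n) (by linarith)
      have : 0 ≤ 3 * (Real.log x ^ (-t) * (n : ℝ) ^ (-t)) := by positivity
      linarith
    · rw [add_zero]
      refine nthPrime_rpow_neg_le hn₁ hL ?_ ht₀ ht₁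
      rw [← Real.log_sqrt (by linarith)]
      exact Real.log_le_log (by positivity) (Nat.lt_of_floor_lt (not_le.1 h)).le
  have hfilter : (Finset.Icc 1 ⌊x⌋₊).filter (· ≤ ⌊√x⌋₊) ⊆ Finset.Icc 1 ⌊√x⌋₊ := by
    intro n hn
    rw [Finset.mem_filter, Finset.mem_Icc] at hn
    exact Finset.mem_Icc.2 ⟨hn.1.1, hn.2⟩
  refine (Finset.sum_le_sum hterm).trans ?_
  rw [Finset.sum_add_distrib, ← Finset.mul_sum, ← Finset.mul_sum, ← Finset.sum_filter]
  have hL₀ : 0 ≤ Real.log x := by linarith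
  refine add_le_add ?_ ?_
  · gcongr
    exact hfloor x (by linarith)
  · exact (Finset.sum_le_sum_of_subset_of_nonneg hfilter fun i _ _ ↦ by positivity).trans
      (hfloor _ (Real.sqrt_nonneg x))

theorem le_sum_nthPrime_rpow_neg {t x : ℝ} (ht₀ : 0 < t) (ht₁ : t < 1) (hx : 1 ≤ x)
    (hL : 64 ≤ Real.log x) :
    5 / 14 * (Real.log x ^ (-t) * ((x ^ (1 - t) - 1) / (1 - t))) ≤
      ∑ n ∈ Finset.Icc 1 ⌊x⌋₊, (nthPrime n : ℝ) ^ (-t) := by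
  have h1t : 0 < 1 - t := by linarith
  have hL₀ : 0 < Real.log x := by linarith
  have hterm : ∀ n ∈ Finset.Icc 1 ⌊x⌋₊, 5 / 14 * (Real.log x ^ (-t) * (n : ℝ) ^ (-t)) ≤
      (nthPrime n : ℝ) ^ (-t) := by
    intro n hn
    rw [Finset.mem_Icc] at hn
    have hn₀ : (0 : ℝ) < n := by exact_mod_cast hn.1
    have hnx : (n : ℝ) ≤ x := (Nat.le_floor_iff (by linarith)).1 hn.2
    have hp : (0 : ℝ) < nthPrime n := by exact_mod_cast hn.1.trans (le_nthPrime n)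
    have h := mul_mul_rpow_neg_le (a := 14 / 5) (by norm_num) hn₀ hL₀ ht₁
    rw [show (1 / (14 / 5) : ℝ) = 5 / 14 by norm_num] at h
    exact h.trans (Real.rpow_le_rpow_of_nonpos hp
      (nthPrime_le hn.1 hL (Real.log_le_log hn₀ hnx)) (by linarith))
  refine le_trans ?_ (Finset.sum_le_sum hterm)
  rw [← Finset.mul_sum, ← Finset.mul_sum]
  gcongr
  refine le_trans ?_ (le_sum_Icc_rpow_neg ht₀ ht₁ ⌊x⌋₊)
  gcongr
  exact (Nat.lt_floor_add_one x).le

theorem three_mul_sq_lt_exp {y : ℝ} (hy : 16 ≤ y) : 3 * (y ^ 2 / 4) < Real.exp y := by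
  have h := Real.pow_div_factorial_le_exp y (by linarith) 3
  norm_num [Nat.factorial] at h
  nlinarith [sq_nonneg y, mul_nonneg (sq_nonneg y) (sub_nonneg.2 hy)]

theorem sum_reciprocal_prime_powers_bounds
    (t x : ℝ) (ht₁ : 1 / 2 < t) (ht₂ : t < 1)
    (hx : Real.exp (16 / (1 - t) ^ 2) ≤ x) :
    7 / 20 * (x ^ (1 - t) / ((1 - t) * Real.log x ^ t)) <
        (∑ n ∈ Finset.Icc 1 ⌊x⌋₊, (nthPrime n : ℝ) ^ (-t)) ∧
      (∑ n ∈ Finset.Icc 1 ⌊x⌋₊, (nthPrime n : ℝ) ^ (-t)) <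
        10 / 3 * (x ^ (1 - t) / ((1 - t) * Real.log x ^ t)) := by
  have h1t : 0 < 1 - t := by linarith
  have ht₀ : 0 < t := by linarith
  have hx₀ : 0 < x := (Real.exp_pos _).trans_le hx
  set L := Real.log x with hL_def
  have hL : 16 / (1 - t) ^ 2 ≤ L := (Real.le_log_iff_exp_le hx₀).2 hx
  have hL' : 16 ≤ L * (1 - t) ^ 2 := (div_le_iff₀ (by positivity)).1 hL
  have hL₆₄ : 64 ≤ L := by
    refine le_trans ?_ hL
    rw [le_div_iff₀ (by positivity)]
    nlinarith
  have hL₀ : 0 < L := by linarith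
  have hx₁ : 1 ≤ x := le_trans (Real.one_le_exp (by positivity)) hx
  have hsqrtL : √L ^ 2 = L := Real.sq_sqrt hL₀.le
  have hsqrtL₈ : 8 ≤ √L := Real.le_sqrt_of_sq_le (by linarith)
  have hmul : 4 ≤ √L * (1 - t) := by
    refine le_of_sq_le_sq ?_ (by positivity)
    rw [mul_pow, hsqrtL]; linarith
  have hexponent : 2 * √L ≤ L * (1 - t) / 2 := by
    calc 2 * √L = √L * 4 / 2 := by ring
      _ ≤ √L * (√L * (1 - t)) / 2 := by gcongr
      _ = √L ^ 2 * (1 - t) / 2 := by ring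
      _ = L * (1 - t) / 2 := by rw [hsqrtL]
  have hxpow : x ^ (1 - t) = √x ^ (1 - t) * √x ^ (1 - t) := by
    rw [← Real.mul_rpow (by positivity) (by positivity), Real.mul_self_sqrt hx₀.le]
  have hsqrt_pow : 3 * L < √x ^ (1 - t) := by
    rw [Real.rpow_def_of_pos (Real.sqrt_pos.2 hx₀), Real.log_sqrt hx₀.le]
    calc 3 * L = 3 * ((2 * √L) ^ 2 / 4) := by rw [mul_pow, hsqrtL]; ring
      _ < Real.exp (2 * √L) := three_mul_sq_lt_exp (by linarith)
      _ ≤ _ := Real.exp_le_exp.2 (by linarith)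
  have hLt : L ^ t ≤ L := (Real.rpow_le_rpow_of_exponent_le (by linarith) ht₂.le).trans_eq
    (Real.rpow_one L)
  have hLt₀ : 0 < L ^ t := by positivity
  have hLneg : L ^ (-t) = (L ^ t)⁻¹ := Real.rpow_neg hL₀.le t
  constructor
  · refine lt_of_lt_of_le ?_ (le_sum_nthPrime_rpow_neg ht₀ ht₂ hx₁ hL₆₄)
    rw [← hL_def, hLneg]
    have hlt : 7 / 20 * x ^ (1 - t) < 5 / 14 * (x ^ (1 - t) - 1) := by
      rw [hxpow]; nlinarith
    calc 7 / 20 * (x ^ (1 - t) / ((1 - t) * L ^ t))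
        = 7 / 20 * x ^ (1 - t) / ((1 - t) * L ^ t) := by ring
      _ < 5 / 14 * (x ^ (1 - t) - 1) / ((1 - t) * L ^ t) := by gcongr
      _ = _ := by field_simp
  · refine lt_of_le_of_lt (sum_nthPrime_rpow_neg_le ht₀ ht₂ hx₁ hL₆₄) ?_
    rw [← hL_def, hLneg]
    have hlt : 3 * x ^ (1 - t) + √x ^ (1 - t) * L ^ t < 10 / 3 * x ^ (1 - t) := by
      rw [hxpow]; nlinarith
    calc 3 * ((L ^ t)⁻¹ * (x ^ (1 - t) / (1 - t))) + √x ^ (1 - t) / (1 - t)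
        = (3 * x ^ (1 - t) + √x ^ (1 - t) * L ^ t) / ((1 - t) * L ^ t) := by field_simp
      _ < 10 / 3 * x ^ (1 - t) / ((1 - t) * L ^ t) := by gcongr
      _ = _ := by ring
end
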